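/- (Theorem: rate of contraction for fixed-design regression with the simplified kernel mixture of polynomials prior) Let α > 0, B > 0, m ≥ α, p ∈ ℕ₊, σ₀ > 0, and a_σ, b_σ ≥ 2. Let f₀ ∈ 𝔠^{α,B}([0,1]^p) and let (x_i)_{i=1}^n ⊂ [0,1]^p be fixed design points. Set K_n = ⌈(n/log n)^{1/(2α+p)}⌉, h = 2/K_n, μ_k = μ_k^⋆ for all k ∈ [K_n]^p, and parametrize f(x) = Σ_{k ∈ [K_n]^p} Σ_{s : |s| ≤ m} ξ_{ks} ψ_{ks}(x) with ψ_{ks}(x) = φ_h(x−μ_k^⋆)(x−μ_k^⋆)^s / Σ_{l ∈ [K_n]^p} φ_h(x−μ_l^⋆). Let the prior Π^n put ξ_{ks} | σ ~ N(0, n²σ²) independently and σ² ~ inverse-Gamma with density ∝ (σ²)^{−a_σ/2−1} exp(−b_σ/(2σ²)). Assume y_i = f₀(x_i) + e_i with e_i i.i.d. N(0, σ₀²). Then there exists M > 0 such that, with ε_n = n^{−α/(2α+p)} (log n)^{α/(2α+p)}, the posterior satisfies Π^n( ‖f − f₀‖²_{L₂(P_n)} > M ε_n² | D_n ) → 0 in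 P₀-probability as n → ∞, where ‖f − f₀‖_{L₂(P_n)} = [ (1/n) Σ_{i=1}^n (f(x_i) − f₀(x_i))² ]^{1/2}. -/

import Mathlib

open MeasureTheory Filter Real Matrix
open scoped ENNReal NNReal BigOperators Classical

noncomputable section

namespace KMP

/-- The unit hypercube `[0,1]^p`. -/
def cube (p : ℕ) : Set (Fin p → ℝ) := {x | ∀ j, 0 ≤ x j ∧ x j ≤ 1}

/-- A boxed kernel: continuous, `[0,1]`-valued, supported on the closed unit sup-norm ball,
nonincreasing in the sup-norm (`‖·‖` on `Fin p → ℝ` is the sup-norm). -/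
def IsBoxedKernel {p : ℕ} (φ : (Fin p → ℝ) → ℝ) : Prop :=
  Continuous φ ∧ (∀ u, 0 ≤ φ u ∧ φ u ≤ 1) ∧ (∀ u, 1 < ‖u‖ → φ u = 0) ∧
    ∀ u v, ‖u‖ ≤ ‖v‖ → φ v ≤ φ u

/-- The block `X_K(k) = ∏_j ((k_j-1)/K, k_j/K]`; here `k j : Fin K` encodes `k_j - 1`. -/
def block {p : ℕ} (K : ℕ) (k : Fin p → Fin K) : Set (Fin p → ℝ) :=
  {x | ∀ j, ((k j : ℕ) : ℝ) / K < x j ∧ x j ≤ (((k j : ℕ) : ℝ) + 1) / K}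

/-- The closure of the block `X_K(k)`. -/
def blockCl {p : ℕ} (K : ℕ) (k : Fin p → Fin K) : Set (Fin p → ℝ) :=
  {x | ∀ j, ((k j : ℕ) : ℝ) / K ≤ x j ∧ x j ≤ (((k j : ℕ) : ℝ) + 1) / K}

/-- The center `μ_k^⋆` of the block `X_K(k)`. -/
def center {p : ℕ} (K : ℕ) (k : Fin p → Fin K) : Fin p → ℝ :=
  fun j => (2 * ((k j : ℕ) : ℝ) + 1) / (2 * K)

/-- Multi-indices `s ∈ {0,…,m}^p` with `|s| ≤ m`. -/
def mIdx (p m : ℕ) : Finset (Fin p → Fin (m + 1)) :=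
  Finset.univ.filter fun s => (∑ j, (s j : ℕ)) ≤ m

/-- Degree `|s|` of a multi-index. -/
def deg {p m : ℕ} (s : Fin p → Fin (m + 1)) : ℕ := ∑ j, (s j : ℕ)

/-- Kernel mixture weight `w_k(x) = φ_h(x-μ_k) / ∑_l φ_h(x-μ_l)`. -/
def weight {p : ℕ} (φ : (Fin p → ℝ) → ℝ) (K : ℕ) (h : ℝ)
    (μ : (Fin p → Fin K) → Fin p → ℝ) (k : Fin p → Fin K) (x : Fin p → ℝ) : ℝ :=
  φ (fun j => (x j - μ k j) / h) / ∑ l : Fin p → Fin K, φ (fun j => (x j - μ l j) / h)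

/-- Monomial `(x - μ_k^⋆)^s`. -/
def mono {p : ℕ} (K m : ℕ) (k : Fin p → Fin K) (s : Fin p → Fin (m + 1))
    (x : Fin p → ℝ) : ℝ :=
  ∏ j, (x j - center K k j) ^ (s j : ℕ)

/-- A kernel mixture of polynomials
`f(x) = ∑_k ∑_{|s| ≤ m} ξ_{ks} w_k(x) (x - μ_k^⋆)^s`. -/
def kmpFun {p : ℕ} (φ : (Fin p → ℝ) → ℝ) (K m : ℕ) (h : ℝ)
    (μ : (Fin p → Fin K) → Fin p → ℝ)
    (ξ : (Fin p → Fin K) → (Fin p → Fin (m + 1)) → ℝ) (x : Fin p → ℝ) : ℝ :=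
  ∑ k : Fin p → Fin K, ∑ s ∈ mIdx p m, ξ k s * weight φ K h μ k x * mono K m k s x

/-- Partial derivative in the `j`-th coordinate direction. -/
def pderiv1 {p : ℕ} (j : Fin p) (f : (Fin p → ℝ) → ℝ) : (Fin p → ℝ) → ℝ :=
  fun x => fderiv ℝ f x (Pi.single j 1)

/-- Mixed partial derivative `D^s f`. -/
def mderiv {p : ℕ} (s : Fin p → ℕ) (f : (Fin p → ℝ) → ℝ) : (Fin p → ℝ) → ℝ :=
  (List.finRange p).foldr (fun j g => (pderiv1 j)^[s j] g) f

/-- Degree of an `ℕ`-valued multi-index. -/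
def degN {p : ℕ} (s : Fin p → ℕ) : ℕ := ∑ j, s j

/-- Euclidean norm on `Fin p → ℝ`. -/
def eucNorm {p : ℕ} (x : Fin p → ℝ) : ℝ := Real.sqrt (∑ j, (x j) ^ 2)

/-- `⌈α - 1⌉` (as a natural number; it is `0` when `α ≤ 1`). -/
def hOrder (α : ℝ) : ℕ := ⌈α - 1⌉₊

/-- The α-Hölder class with envelope `B` on `[0,1]^p`: `⌈α-1⌉`-times continuously
differentiable, and the sum of the sup-norm bound on all derivatives of order `≤ ⌈α-1⌉`
and the Hölder constant of the derivatives of order `⌈α-1⌉` is at most `B`. -/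
def IsHolder (p : ℕ) (α B : ℝ) (f : (Fin p → ℝ) → ℝ) : Prop :=
  ContDiff ℝ (hOrder α : ℕ∞) f ∧
    ∃ B₁ B₂ : ℝ, 0 ≤ B₁ ∧ 0 ≤ B₂ ∧ B₁ + B₂ ≤ B ∧
      (∀ s : Fin p → ℕ, degN s ≤ hOrder α → ∀ x ∈ cube p, |mderiv s f x| ≤ B₁) ∧
      (∀ s : Fin p → ℕ, degN s = hOrder α → ∀ x ∈ cube p, ∀ y ∈ cube p, x ≠ y →
        |mderiv s f x - mderiv s f y| ≤ B₂ * eucNorm (x - y) ^ (α - (degN s : ℝ)))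

/-- The `N(0, σ²)` density `φ_σ`. -/
def gaussD (σ t : ℝ) : ℝ := (σ * Real.sqrt (2 * π))⁻¹ * Real.exp (-t ^ 2 / (2 * σ ^ 2))

/-- `K_n = ⌈(n / log n)^{1/(2α+p)}⌉`. -/
def Kn (α : ℝ) (p n : ℕ) : ℕ := ⌈((n : ℝ) / Real.log n) ^ (1 / (2 * α + (p : ℝ)))⌉₊

/-- The simplified kernel mixture of polynomials of the fixed-design setting:
`K = K_n`, `h = 2/K_n`, and all centers fixed at the block centers `μ_k^⋆`. -/
def simpleKmp {p : ℕ} (φ : (Fin p → ℝ) → ℝ) (m : ℕ) (α : ℝ) (n : ℕ)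
    (ξ : (Fin p → Fin (Kn α p n)) → (Fin p → Fin (m + 1)) → ℝ) :
    (Fin p → ℝ) → ℝ :=
  kmpFun φ (Kn α p n) m (2 / (Kn α p n : ℝ)) (fun k => center (Kn α p n) k) ξ

/-- Generic posterior probability of a set `A` given likelihood `L` and prior. -/
def postGen {Θ : Type*} [MeasurableSpace Θ] (prior : Measure Θ) (L : Θ → ℝ)
    (A : Set Θ) : ℝ :=
  (∫ θ in A, L θ ∂prior) / ∫ θ, L θ ∂prior

/-- The prior of the fixed-design setting on `(ξ, σ²)`: `σ² = v ~ πv` (inverse Gamma) and,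
given `v`, the coefficients `ξ_{ks} ~ N(0, n² v)` i.i.d. -/
def fixedPrior (α : ℝ) (p m n : ℕ) (πv : Measure ℝ) :
    Measure (((Fin p → Fin (Kn α p n)) → (Fin p → Fin (m + 1)) → ℝ) × ℝ) :=
  πv.bind fun v =>
    (Measure.pi fun _ : Fin p → Fin (Kn α p n) =>
        Measure.pi fun _ : Fin p → Fin (m + 1) =>
          ProbabilityTheory.gaussianReal 0 (Real.toNNReal ((n : ℝ) ^ 2 * v))).prod
      (Measure.dirac v)

/-- Iterated partial derivatives along a list of coordinates. -/
def lderiv {p : ℕ} (L : List (Fin p)) (f : (Fin p → ℝ) → ℝ) : (Fin p → ℝ) → ℝ :=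
  L.foldr pderiv1 f

theorem pderiv1_contDiff {p : ℕ} (j : Fin p) (f : (Fin p → ℝ) → ℝ) (k : ℕ)
    (hf : ContDiff ℝ ((k + 1 : ℕ) : ℕ∞) f) : ContDiff ℝ (k : ℕ∞) (pderiv1 j f) := by
  have h1 : ContDiff ℝ (k : ℕ∞) (fderiv ℝ f) := by
    apply hf.fderiv_right
    norm_cast
  exact h1.clm_apply contDiff_const

theorem lderiv_contDiff {p : ℕ} (f : (Fin p → ℝ) → ℝ) (L : List (Fin p)) :
    ∀ k : ℕ, ContDiff ℝ ((k + L.length : ℕ) : ℕ∞) f → ContDiff ℝ (k : ℕ∞) (lderiv L f) := by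
  induction L with
  | nil => intro k hf; simpa [lderiv] using hf
  | cons j L ih =>
    intro k hf
    apply pderiv1_contDiff
    apply ih
    convert hf using 3
    simp; ring

theorem pderiv1_comm {p : ℕ} (i j : Fin p) (f : (Fin p → ℝ) → ℝ)
    (hf : ContDiff ℝ ((2 : ℕ) : ℕ∞) f) : pderiv1 i (pderiv1 j f) = pderiv1 j (pderiv1 i f) := by
  have hd : Differentiable ℝ (fderiv ℝ f) := by
    have h1 : ContDiff ℝ ((1 : ℕ) : ℕ∞) (fderiv ℝ f) := by
      apply hf.fderiv_right
      norm_cast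
    exact h1.differentiable (by simp)
  have key : ∀ i j : Fin p, ∀ x, pderiv1 i (pderiv1 j f) x
      = fderiv ℝ (fderiv ℝ f) x (Pi.single i 1) (Pi.single j 1) := by
    intro i j x
    unfold pderiv1
    rw [fderiv_clm_apply (hd x) (differentiableAt_const _)]
    simp
  funext x
  rw [key, key]
  have := (hf.contDiffAt (x := x)).isSymmSndFDerivAt (by simp)
  exact this _ _

theorem lderiv_perm {p : ℕ} (f : (Fin p → ℝ) → ℝ) {L₁ L₂ : List (Fin p)} (h : L₁.Perm L₂) :
    ContDiff ℝ ((L₁.length : ℕ) : ℕ∞) f → lderiv L₁ f = lderiv L₂ f := by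
  induction h with
  | nil => intro _; rfl
  | cons j h ih =>
    intro hf
    have : ContDiff ℝ ((List.length _ : ℕ) : ℕ∞) f := hf.of_le (by
      simp only [List.length_cons]; push_cast; exact le_self_add)
    simp only [lderiv, List.foldr_cons] at ih ⊢
    rw [ih this]
  | swap i j L =>
    intro hf
    have h2 : ContDiff ℝ ((2 : ℕ) : ℕ∞) (lderiv L f) := by
      apply lderiv_contDiff
      convert hf using 3
      simp; ring
    exact pderiv1_comm _ _ _ h2
  | trans h1 h2 ih1 ih2 =>
    intro hf
    rw [ih1 hf, ih2 (by rw [← h1.length_eq]; exact hf)]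

theorem mderiv_eq_lderiv {p : ℕ} (s : Fin p → ℕ) (f : (Fin p → ℝ) → ℝ) :
    mderiv s f = lderiv ((List.finRange p).flatMap fun j => List.replicate (s j) j) f := by
  unfold mderiv lderiv
  have h0 : ∀ (j : Fin p) (n : ℕ) (g : (Fin p → ℝ) → ℝ),
      (List.replicate n j).foldr pderiv1 g = (pderiv1 j)^[n] g := by
    intro j n g
    induction n with
    | zero => rfl
    | succ n ih => rw [List.replicate_succ, List.foldr_cons, ih, Function.iterate_succ_apply']
  induction List.finRange p with
  | nil => rfl
  | cons j L ih =>
    rw [List.foldr_cons, List.flatMap_cons, List.foldr_append, h0, ih]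

theorem prod_map_count {p : ℕ} (h : Fin p → ℝ) (L : List (Fin p)) :
    (L.map h).prod = ∏ j, h j ^ L.count j := by
  induction L with
  | nil => simp
  | cons i L ih =>
    rw [List.map_cons, List.prod_cons, ih]
    simp only [List.count_cons, pow_add, Finset.prod_mul_distrib]
    rw [mul_comm]
    congr 1
    symm
    rw [Finset.prod_eq_single i]
    · simp
    · intro b _ hb; simp [hb.symm]
    · simp

theorem sum_count {p : ℕ} (L : List (Fin p)) : ∑ j, L.count j = L.length := by
  induction L with
  | nil => simp
  | cons i L ih =>
    simp only [List.count_cons, Finset.sum_add_distrib, ih, List.length_cons]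
    congr 1
    rw [Finset.sum_eq_single i]
    · simp
    · intro b _ hb; simp [hb.symm]
    · simp

theorem lderiv_eq_mderiv {p : ℕ} (f : (Fin p → ℝ) → ℝ) (L : List (Fin p))
    (hf : ContDiff ℝ ((L.length : ℕ) : ℕ∞) f) :
    lderiv L f = mderiv (fun j => L.count j) f := by
  rw [mderiv_eq_lderiv]
  apply lderiv_perm _ _ hf
  rw [List.perm_iff_count]
  intro a
  rw [List.count_flatMap]
  have : (List.map (List.count a ∘ fun j => List.replicate (L.count j) j) (List.finRange p))
    = (List.map (fun j => if j = a then L.count a else 0) (List.finRange p)) := by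
    apply List.map_congr_left
    intro j _
    simp only [Function.comp, List.count_replicate]
    by_cases h : j = a <;> simp [h]
  rw [this]
  rw [← List.ofFn_eq_map, List.sum_ofFn]
  simp

theorem iteratedDeriv_line {p : ℕ} (f : (Fin p → ℝ) → ℝ) (c h : Fin p → ℝ) (i : ℕ) :
    ContDiff ℝ (i : ℕ∞) f → iteratedDeriv i (fun t : ℝ => f (c + t • h)) =
      fun t => ∑ J : Fin i → Fin p, (∏ l, h (J l)) * lderiv (List.ofFn J) f (c + t • h) := by
  induction i with
  | zero => intro _; funext t; simp [lderiv]
  | succ i ih =>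
    intro hf
    rw [iteratedDeriv_succ, ih (hf.of_le (by push_cast; exact le_self_add))]
    funext t
    have hd : ∀ J : Fin i → Fin p, HasDerivAt (fun t : ℝ => lderiv (List.ofFn J) f (c + t • h))
        (∑ j, h j * pderiv1 j (lderiv (List.ofFn J) f) (c + t • h)) t := by
      intro J
      have h1 : ContDiff ℝ ((1 : ℕ) : ℕ∞) (lderiv (List.ofFn J) f) := by
        apply lderiv_contDiff
        convert hf using 3
        simp; ring
      have h2 : HasFDerivAt (lderiv (List.ofFn J) f) (fderiv ℝ (lderiv (List.ofFn J) f) (c + t • h))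
        (c + t • h) := ((h1.differentiable (by simp)) _).hasFDerivAt
      have h3 : HasDerivAt (fun t : ℝ => c + t • h) h t := by
        simpa using ((hasDerivAt_id t).smul_const h).const_add c
      have h4 := h2.comp_hasDerivAt t h3
      have h5 : fderiv ℝ (lderiv (List.ofFn J) f) (c + t • h) h
          = fderiv ℝ (lderiv (List.ofFn J) f) (c + t • h) (∑ j, Pi.single j (h j)) := by
        rw [Finset.univ_sum_single h]
      rw [h5, map_sum] at h4
      refine h4.congr_deriv ?_
      symm
      apply Finset.sum_congr rfl
      intro j _
      unfold pderiv1
      have : (Pi.single j (h j) : Fin p → ℝ) = h j • Pi.single j 1 := by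
        rw [← Pi.single_smul]; simp
      rw [this, map_smul, smul_eq_mul]
    have hs : HasDerivAt (fun t : ℝ => ∑ J : Fin i → Fin p, (∏ l, h (J l)) *
        lderiv (List.ofFn J) f (c + t • h)) (∑ J : Fin i → Fin p, (∏ l, h (J l)) *
          ∑ j, h j * pderiv1 j (lderiv (List.ofFn J) f) (c + t • h)) t :=
      HasDerivAt.fun_sum fun J _ => (hd J).const_mul _
    rw [hs.deriv]
    rw [← Equiv.sum_comp (Fin.consEquiv fun _ => Fin p), Fintype.sum_prod_type_right]
    apply Finset.sum_congr rfl
    intro J _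
    rw [Finset.mul_sum]
    apply Finset.sum_congr rfl
    intro j _
    simp only [Fin.consEquiv, Equiv.coe_fn_mk, Fin.prod_univ_succ, Fin.cons_zero, Fin.cons_succ,
      List.ofFn_succ]
    simp only [lderiv, List.foldr_cons]
    ring

theorem taylor_line (g : ℝ → ℝ) (r : ℕ) (hg : ContDiff ℝ (r : ℕ∞) g) :
    ∃ t ∈ Set.Icc (0 : ℝ) 1, g 1 = ∑ i ∈ Finset.range (r + 1),
      ((i.factorial : ℝ)⁻¹) * iteratedDeriv i g 0 +
      ((r.factorial : ℝ)⁻¹) * (iteratedDeriv r g t - iteratedDeriv r g 0) := by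
  cases r with
  | zero => exact ⟨1, by simp, by simp⟩
  | succ n =>
    obtain ⟨t, ht, h⟩ := taylor_mean_remainder_lagrange_iteratedDeriv (f := g) (x := 1) (x₀ := 0)
      (n := n) (by norm_num) (by
        have := hg.contDiffOn (s := Set.uIcc 0 1)
        push_cast at this
        exact this)
    rw [Set.uIoo_of_le zero_le_one] at ht
    refine ⟨t, ⟨ht.1.le, ht.2.le⟩, ?_⟩
    rw [taylor_within_apply] at h
    have hw : ∀ k ∈ Finset.range (n + 1), ((k.factorial : ℝ)⁻¹ * (1 - 0) ^ k) •
        iteratedDerivWithin k g (Set.uIcc 0 1) 0 = (k.factorial : ℝ)⁻¹ * iteratedDeriv k g 0 := by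
      intro k hk
      rw [iteratedDerivWithin_eq_iteratedDeriv]
      · simp
      · exact uniqueDiffOn_uIcc (by norm_num)
      · have : (k : ℕ∞) ≤ ((n + 1 : ℕ) : ℕ∞) := by
          have := Finset.mem_range.1 hk
          exact_mod_cast this.le
        exact (hg.of_le (by exact_mod_cast this)).contDiffAt
      · simp
    rw [Finset.sum_congr rfl hw] at h
    rw [Finset.sum_range_succ]
    simp only [sub_zero, one_pow, mul_one] at h
    rw [div_eq_inv_mul] at h
    linarith

theorem taylor_multi {p : ℕ} (f : (Fin p → ℝ) → ℝ) (r : ℕ) (hf : ContDiff ℝ (r : ℕ∞) f)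
    (c x : Fin p → ℝ) :
    ∃ t ∈ Set.Icc (0 : ℝ) 1, f x = ∑ i ∈ Finset.range (r + 1), ((i.factorial : ℝ)⁻¹) *
        (∑ J : Fin i → Fin p, (∏ l, (x - c) (J l)) * lderiv (List.ofFn J) f c) +
      ((r.factorial : ℝ)⁻¹) * (∑ J : Fin r → Fin p, (∏ l, (x - c) (J l)) *
        (lderiv (List.ofFn J) f (c + t • (x - c)) - lderiv (List.ofFn J) f c)) := by
  have hg : ContDiff ℝ (r : ℕ∞) (fun t : ℝ => f (c + t • (x - c))) :=
    hf.comp (contDiff_const.add (contDiff_id.smul contDiff_const))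
  obtain ⟨t, ht, h⟩ := taylor_line _ r hg
  refine ⟨t, ht, ?_⟩
  have h1 : f (c + (1 : ℝ) • (x - c)) = f x := by simp
  simp only [h1] at h
  rw [h]
  congr 1
  · apply Finset.sum_congr rfl
    intro i hi
    have : (i : ℕ∞) ≤ (r : ℕ∞) := by
      have := Finset.mem_range.1 hi
      exact_mod_cast (by omega : i ≤ r)
    rw [iteratedDeriv_line f c _ i (hf.of_le (by exact_mod_cast this))]
    simp
  · rw [iteratedDeriv_line f c _ r hf]
    simp only [mul_sub, Finset.sum_sub_distrib]
    simp

theorem hOrder_lt {α : ℝ} (hα : 0 < α) : (hOrder α : ℝ) < α := by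
  unfold hOrder
  by_cases h : 0 ≤ α - 1
  · have := Nat.ceil_lt_add_one h
    linarith
  · have : ⌈α - 1⌉₊ = 0 := Nat.ceil_eq_zero.2 (by linarith)
    rw [this]; simpa using hα

theorem eucNorm_le {p : ℕ} (x : Fin p → ℝ) : eucNorm x ≤ p * ‖x‖ := by
  unfold eucNorm
  rw [Real.sqrt_le_left (by positivity)]
  have h1 : ∀ j ∈ (Finset.univ : Finset (Fin p)), (x j) ^ 2 ≤ ‖x‖ ^ 2 := by
    intro j _
    have := norm_le_pi_norm x j
    rw [Real.norm_eq_abs] at this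
    rw [← sq_abs]
    gcongr
  calc ∑ j, (x j) ^ 2 ≤ ∑ j : Fin p, ‖x‖ ^ 2 := Finset.sum_le_sum h1
    _ = p * ‖x‖ ^ 2 := by simp
    _ ≤ (p * ‖x‖) ^ 2 := by
      rw [mul_pow]
      gcongr
      norm_cast
      exact Nat.le_self_pow (by norm_num) p

theorem holder_poly {p m : ℕ} {α B : ℝ} (hα : 0 < α) (hm : α ≤ m) (f : (Fin p → ℝ) → ℝ)
    (hf : IsHolder p α B f) :
    ∃ A : ℝ, 0 < A ∧ ∀ c ∈ cube p, ∃ a : (Fin p → Fin (m + 1)) → ℝ, (∀ s, |a s| ≤ A) ∧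
      ∀ x ∈ cube p, |f x - ∑ s ∈ mIdx p m, a s * ∏ j, (x j - c j) ^ (s j : ℕ)|
        ≤ A * ‖x - c‖ ^ α := by
  obtain ⟨hC, B₁, B₂, hB₁, hB₂, -, hb1, hb2⟩ := hf
  set r := hOrder α with hr
  have hrα : (r : ℝ) < α := hOrder_lt hα
  have hrm : r ≤ m := by
    have : (r : ℝ) < m := lt_of_lt_of_le hrα hm
    exact_mod_cast this.le
  have hCi : ∀ i ≤ r, ContDiff ℝ (i : ℕ∞) f := fun i hi => hC.of_le (by exact_mod_cast hi)
  have hld : ∀ (i : ℕ) (_ : i ≤ r) (J : Fin i → Fin p), lderiv (List.ofFn J) f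
      = mderiv (fun j => (List.ofFn J).count j) f := by
    intro i hi J
    apply lderiv_eq_mderiv
    rw [List.length_ofFn]; exact hCi i hi
  have hdeg : ∀ (i : ℕ) (J : Fin i → Fin p), degN (fun j => (List.ofFn J).count j) = i := by
    intro i J
    unfold degN
    rw [sum_count, List.length_ofFn]
  set A₁ : ℝ := ∑ i ∈ Finset.range (r + 1), (p : ℝ) ^ i * B₁ with hA₁
  set A₂ : ℝ := (p : ℝ) ^ r * (B₂ * (p : ℝ) ^ (α - r)) with hA₂
  have hA₁0 : 0 ≤ A₁ := Finset.sum_nonneg fun i _ => by positivity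
  have hA₂0 : 0 ≤ A₂ := by positivity
  refine ⟨A₁ + A₂ + 1, by positivity, ?_⟩
  intro c hc
  refine ⟨fun s => ∑ i ∈ Finset.range (r + 1), ∑ J : Fin i → Fin p,
    if (∀ j, (List.ofFn J).count j = (s j : ℕ)) then
      (i.factorial : ℝ)⁻¹ * lderiv (List.ofFn J) f c else 0, ?_, ?_⟩
  · intro s
    refine (Finset.abs_sum_le_sum_abs _ _).trans ?_
    have : A₁ ≤ A₁ + A₂ + 1 := by linarith
    refine le_trans ?_ this
    apply Finset.sum_le_sum
    intro i hi
    refine (Finset.abs_sum_le_sum_abs _ _).trans ?_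
    have hi' : i ≤ r := by have := Finset.mem_range.1 hi; omega
    calc _ ≤ ∑ J : Fin i → Fin p, B₁ := by
          apply Finset.sum_le_sum
          intro J _
          split_ifs
          · rw [abs_mul, hld i hi' J, abs_of_nonneg (by positivity : (0 : ℝ) ≤ (i.factorial : ℝ)⁻¹)]
            have h1 := hb1 (fun j => (List.ofFn J).count j) (by rw [hdeg]; exact hi') c hc
            have h2 : (i.factorial : ℝ)⁻¹ ≤ 1 := by
              apply inv_le_one_of_one_le₀
              exact_mod_cast Nat.succ_le_of_lt i.factorial_pos
            calc _ ≤ 1 * B₁ := by gcongr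
              _ = B₁ := one_mul _
          · simpa using hB₁
      _ = (p : ℝ) ^ i * B₁ := by simp
  · intro x hx
    obtain ⟨t, ht, htay⟩ := taylor_multi f r hC c x
    have hpoly : ∑ s ∈ mIdx p m, (∑ i ∈ Finset.range (r + 1), ∑ J : Fin i → Fin p,
        if (∀ j, (List.ofFn J).count j = (s j : ℕ)) then
          (i.factorial : ℝ)⁻¹ * lderiv (List.ofFn J) f c else 0) * ∏ j, (x j - c j) ^ (s j : ℕ)
        = ∑ i ∈ Finset.range (r + 1), ((i.factorial : ℝ)⁻¹) *
        (∑ J : Fin i → Fin p, (∏ l, (x - c) (J l)) * lderiv (List.ofFn J) f c) := by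
      simp only [Finset.sum_mul]
      rw [Finset.sum_comm]
      apply Finset.sum_congr rfl
      intro i hi
      have hi' : i ≤ r := by have := Finset.mem_range.1 hi; omega
      rw [Finset.sum_comm, Finset.mul_sum]
      apply Finset.sum_congr rfl
      intro J _
      have hle : ∀ j, (List.ofFn J).count j < m + 1 := by
        intro j
        have : (List.ofFn J).count j ≤ (List.ofFn J).length := List.count_le_length
        rw [List.length_ofFn] at this
        omega
      set s₀ : Fin p → Fin (m + 1) := fun j => ⟨(List.ofFn J).count j, hle j⟩ with hs₀
      rw [Finset.sum_eq_single s₀]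
      · rw [if_pos (by intro j; rfl)]
        have : ∏ l, (x - c) (J l) = ∏ j, (x j - c j) ^ (s₀ j : ℕ) := by
          have := prod_map_count (x - c) (List.ofFn J)
          rw [List.map_ofFn, List.prod_ofFn] at this
          simpa using this
        rw [this]; ring
      · intro s _ hs
        rw [if_neg, zero_mul]
        intro hh
        apply hs
        funext j
        apply Fin.ext
        exact (hh j).symm
      · intro hn
        exfalso
        apply hn
        simp only [mIdx, Finset.mem_filter, Finset.mem_univ, true_and]
        have := sum_count (List.ofFn J)
        rw [List.length_ofFn] at this
        simp only [hs₀]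
        omega
    rw [hpoly]
    set y := c + t • (x - c) with hy
    have hycube : y ∈ cube p := by
      intro j
      have h1 := hc j
      have h2 := hx j
      simp only [hy, Pi.add_apply, Pi.smul_apply, Pi.sub_apply, smul_eq_mul]
      constructor <;> nlinarith [ht.1, ht.2]
    have hdiff : f x - ∑ i ∈ Finset.range (r + 1), ((i.factorial : ℝ)⁻¹) *
        (∑ J : Fin i → Fin p, (∏ l, (x - c) (J l)) * lderiv (List.ofFn J) f c)
        = ((r.factorial : ℝ)⁻¹) * (∑ J : Fin r → Fin p, (∏ l, (x - c) (J l)) *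
        (lderiv (List.ofFn J) f y - lderiv (List.ofFn J) f c)) := by
      linarith
    rw [hdiff]
    have hterm : ∀ J : Fin r → Fin p, |(∏ l, (x - c) (J l)) *
        (lderiv (List.ofFn J) f y - lderiv (List.ofFn J) f c)|
        ≤ ‖x - c‖ ^ r * (B₂ * (p * ‖x - c‖) ^ (α - r)) := by
      intro J
      rw [abs_mul, Finset.abs_prod]
      have h1 : ∏ l, |(x - c) (J l)| ≤ ‖x - c‖ ^ r := by
        calc ∏ l, |(x - c) (J l)| ≤ ∏ l : Fin r, ‖x - c‖ := by
              apply Finset.prod_le_prod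
              · intro _ _; positivity
              · intro l _; exact norm_le_pi_norm (x - c) (J l)
          _ = ‖x - c‖ ^ r := by simp
      have h2 : |lderiv (List.ofFn J) f y - lderiv (List.ofFn J) f c|
          ≤ B₂ * (p * ‖x - c‖) ^ (α - r) := by
        by_cases hyc : y = c
        · rw [hyc, sub_self, abs_zero]; positivity
        · have h3 := hb2 (fun j => (List.ofFn J).count j) (hdeg r J) y hycube c hc hyc
          rw [← hld r le_rfl J, hdeg] at h3
          refine h3.trans ?_
          gcongr
          · exact Real.sqrt_nonneg _
          · refine (eucNorm_le _).trans ?_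
            gcongr
            have : y - c = t • (x - c) := by rw [hy]; simp
            rw [this, norm_smul, Real.norm_eq_abs, abs_of_nonneg ht.1]
            exact mul_le_of_le_one_left (norm_nonneg _) ht.2
      gcongr
    rw [abs_mul, abs_of_nonneg (by positivity : (0 : ℝ) ≤ (r.factorial : ℝ)⁻¹)]
    have h2 : (r.factorial : ℝ)⁻¹ ≤ 1 := by
      apply inv_le_one_of_one_le₀
      exact_mod_cast Nat.succ_le_of_lt r.factorial_pos
    have h3 : |∑ J : Fin r → Fin p, (∏ l, (x - c) (J l)) *
        (lderiv (List.ofFn J) f y - lderiv (List.ofFn J) f c)| ≤ A₂ * ‖x - c‖ ^ α := by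
      refine (Finset.abs_sum_le_sum_abs _ _).trans ?_
      refine (Finset.sum_le_sum fun J _ => hterm J).trans ?_
      rw [Real.mul_rpow (by positivity) (by positivity)]
      have : ‖x - c‖ ^ α = ‖x - c‖ ^ r * ‖x - c‖ ^ (α - r) := by
        rw [← Real.rpow_natCast, ← Real.rpow_add_of_nonneg (norm_nonneg _) (by positivity)
          (by linarith)]
        congr 1; ring
      rw [this, hA₂]
      simp only [Finset.sum_const, Finset.card_univ, Fintype.card_fun, Fintype.card_fin,
        nsmul_eq_mul]
      push_cast
      apply le_of_eq; ring
    calc _ ≤ 1 * (A₂ * ‖x - c‖ ^ α) := by gcongr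
      _ ≤ (A₁ + A₂ + 1) * ‖x - c‖ ^ α := by
        rw [one_mul]
        gcongr
        linarith

theorem center_mem {p K : ℕ} (hK : 0 < K) (k : Fin p → Fin K) : center K k ∈ cube p := by
  intro j
  have hK' : (0 : ℝ) < K := by exact_mod_cast hK
  have h1 : ((k j : ℕ) : ℝ) + 1 ≤ K := by exact_mod_cast (k j).2
  unfold center
  constructor
  · positivity
  · rw [div_le_one (by positivity)]
    have : (0 : ℝ) ≤ ((k j : ℕ) : ℝ) := by positivity
    linarith

theorem exists_near {p K : ℕ} (hK : 0 < K) (x : Fin p → ℝ) (hx : x ∈ cube p) :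
    ∃ k : Fin p → Fin K, ∀ j, |x j - center K k j| ≤ 1 / (2 * K) := by
  have hK' : (0 : ℝ) < K := by exact_mod_cast hK
  have : ∀ j, ∃ k : Fin K, |x j - (2 * ((k : ℕ) : ℝ) + 1) / (2 * K)| ≤ 1 / (2 * K) := by
    intro j
    obtain ⟨h0, h1⟩ := hx j
    have key : ∀ k : ℕ, (k : ℝ) ≤ x j * K → x j * K ≤ k + 1 →
        |x j - (2 * (k : ℝ) + 1) / (2 * K)| ≤ 1 / (2 * K) := by
      intro k h2 h3
      have : x j - (2 * (k : ℝ) + 1) / (2 * K) = (2 * (x j * K) - (2 * k + 1)) / (2 * K) := by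
        field_simp
      rw [this, abs_div, abs_of_pos (by positivity : (0 : ℝ) < 2 * K)]
      gcongr
      rw [abs_le]
      constructor <;> linarith
    by_cases hlt : x j = 1
    · refine ⟨⟨K - 1, by omega⟩, key _ ?_ ?_⟩
      · rw [hlt]; simp
      · rw [hlt]
        have : ((K - 1 : ℕ) : ℝ) = K - 1 := by
          rw [Nat.cast_sub hK]; simp
        simp [this]
    · have hlt' : x j < 1 := lt_of_le_of_ne h1 hlt
      have hfl : ⌊x j * K⌋₊ < K := by
        rw [Nat.floor_lt (by positivity)]
        nlinarith
      refine ⟨⟨_, hfl⟩, key _ (Nat.floor_le (by positivity)) (Nat.lt_floor_add_one _).le⟩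
  choose k hk using this
  exact ⟨k, hk⟩

theorem weight_den_pos {p K : ℕ} (hK : 0 < K) {φ : (Fin p → ℝ) → ℝ} (hφ : IsBoxedKernel φ)
    (hφpos : ∀ u : Fin p → ℝ, ‖u‖ < 1 → 0 < φ u) (x : Fin p → ℝ) (hx : x ∈ cube p) :
    0 < ∑ l : Fin p → Fin K, φ (fun j => (x j - center K l j) / (2 / (K : ℝ))) := by
  have hK' : (0 : ℝ) < K := by exact_mod_cast hK
  obtain ⟨k, hk⟩ := exists_near hK x hx
  apply Finset.sum_pos' (fun l _ => (hφ.2.1 _).1)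
  refine ⟨k, Finset.mem_univ _, hφpos _ ?_⟩
  rw [pi_norm_lt_iff one_pos]
  intro j
  rw [Real.norm_eq_abs, abs_div, abs_of_pos (by positivity : (0 : ℝ) < 2 / K),
    div_lt_one (by positivity)]
  refine lt_of_le_of_lt (hk j) ?_
  rw [div_lt_div_iff₀ (by positivity) hK']
  nlinarith

theorem weight_props {p K : ℕ} (hK : 0 < K) {φ : (Fin p → ℝ) → ℝ} (hφ : IsBoxedKernel φ)
    (hφpos : ∀ u : Fin p → ℝ, ‖u‖ < 1 → 0 < φ u) (x : Fin p → ℝ) (hx : x ∈ cube p) :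
    (∀ k, 0 ≤ weight φ K (2 / (K : ℝ)) (fun k => center K k) k x) ∧
    (∑ k, weight φ K (2 / (K : ℝ)) (fun k => center K k) k x = 1) ∧
    ∀ k, weight φ K (2 / (K : ℝ)) (fun k => center K k) k x ≠ 0 →
      ‖x - center K k‖ ≤ 2 / (K : ℝ) := by
  have hK' : (0 : ℝ) < K := by exact_mod_cast hK
  have hden := weight_den_pos hK hφ hφpos x hx
  unfold weight
  refine ⟨fun k => div_nonneg (hφ.2.1 _).1 hden.le, ?_, ?_⟩
  · rw [← Finset.sum_div, div_self hden.ne']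
  · intro k hk
    by_contra hcon
    push Not at hcon
    apply hk
    rw [hφ.2.2.1, zero_div]
    have : (fun j => (x j - center K k j) / (2 / (K : ℝ))) = (2 / (K : ℝ))⁻¹ • (x - center K k) := by
      funext j
      simp only [Pi.smul_apply, Pi.sub_apply, smul_eq_mul]
      rw [div_eq_inv_mul]
    rw [this, norm_smul, Real.norm_eq_abs, abs_of_pos (by positivity), ← div_eq_inv_mul,
      one_lt_div (by positivity)]
    exact hcon

theorem kmp_approx {p m : ℕ} {α B : ℝ} (hα : 0 < α) (hm : α ≤ m) (f : (Fin p → ℝ) → ℝ)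
    (hf : IsHolder p α B f) {φ : (Fin p → ℝ) → ℝ} (hφ : IsBoxedKernel φ)
    (hφpos : ∀ u : Fin p → ℝ, ‖u‖ < 1 → 0 < φ u) :
    ∃ A : ℝ, 0 < A ∧ ∀ K : ℕ, 0 < K →
      ∃ ξ : (Fin p → Fin K) → (Fin p → Fin (m + 1)) → ℝ, (∀ k s, |ξ k s| ≤ A) ∧
      ∀ x ∈ cube p, |kmpFun φ K m (2 / (K : ℝ)) (fun k => center K k) ξ x - f x|
        ≤ A * (K : ℝ) ^ (-α) := by
  obtain ⟨A, hA, hpoly⟩ := holder_poly hα hm f hf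
  refine ⟨A + A * 2 ^ α, by positivity, ?_⟩
  intro K hK
  have hK' : (0 : ℝ) < K := by exact_mod_cast hK
  have h1 : ∀ k : Fin p → Fin K, ∃ a : (Fin p → Fin (m + 1)) → ℝ, (∀ s, |a s| ≤ A) ∧
      ∀ x ∈ cube p, |f x - ∑ s ∈ mIdx p m, a s * ∏ j, (x j - center K k j) ^ (s j : ℕ)|
        ≤ A * ‖x - center K k‖ ^ α := fun k => hpoly _ (center_mem hK k)
  choose ξ hξ1 hξ2 using h1
  refine ⟨ξ, fun k s => (hξ1 k s).trans (by
    have : 0 ≤ A * 2 ^ α := by positivity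
    linarith), ?_⟩
  intro x hx
  obtain ⟨hw0, hw1, hw2⟩ := weight_props hK hφ hφpos x hx
  set w := fun k => weight φ K (2 / (K : ℝ)) (fun k => center K k) k x with hw
  have e1 : kmpFun φ K m (2 / (K : ℝ)) (fun k => center K k) ξ x - f x
      = ∑ k, w k * (∑ s ∈ mIdx p m, ξ k s * ∏ j, (x j - center K k j) ^ (s j : ℕ) - f x) := by
    simp only [mul_sub, Finset.sum_sub_distrib, ← Finset.sum_mul]
    rw [show ∑ k, w k = 1 from hw1, one_mul]
    congr 1
    unfold kmpFun mono
    apply Finset.sum_congr rfl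
    intro k _
    rw [Finset.mul_sum]
    apply Finset.sum_congr rfl
    intro s _
    ring
  rw [e1]
  refine (Finset.abs_sum_le_sum_abs _ _).trans ?_
  have e2 : ∀ k ∈ (Finset.univ : Finset (Fin p → Fin K)),
      |w k * (∑ s ∈ mIdx p m, ξ k s * ∏ j, (x j - center K k j) ^ (s j : ℕ) - f x)|
      ≤ w k * (A * (2 / K) ^ α) := by
    intro k _
    rw [abs_mul, abs_of_nonneg (hw0 k)]
    by_cases h0 : w k = 0
    · have h0' : weight φ K (2 / (K : ℝ)) (fun k => center K k) k x = 0 := h0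
      rw [h0, h0']; simp
    · have h3 := hw2 k h0
      have h4 := hξ2 k x hx
      rw [abs_sub_comm]
      have := hw0 k
      gcongr
      refine h4.trans ?_
      gcongr
  refine (Finset.sum_le_sum e2).trans ?_
  rw [← Finset.sum_mul, show ∑ k, w k = 1 from hw1, one_mul, Real.div_rpow (by norm_num) hK'.le,
    Real.rpow_neg hK'.le]
  have : 0 ≤ A * ((K : ℝ) ^ α)⁻¹ := by positivity
  rw [add_mul, div_eq_mul_inv]
  nlinarith

theorem holder_bound {p : ℕ} {α B : ℝ} (f : (Fin p → ℝ) → ℝ)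
    (hf : IsHolder p α B f) : ∀ x ∈ cube p, |f x| ≤ B := by
  obtain ⟨hC, B₁, B₂, hB₁, hB₂, hB, hb1, hb2⟩ := hf
  intro x hx
  have := hb1 (fun _ => 0) (by simp [degN]) x hx
  have h0 : mderiv (fun _ => 0) f = f := by
    rw [mderiv_eq_lderiv]
    have : (List.finRange p).flatMap (fun j => List.replicate 0 j) = [] := by simp
    rw [this]; rfl
  rw [h0] at this
  linarith

section core
variable {E : Type*} [NormedAddCommGroup E] [NormedSpace ℝ E] [FiniteDimensional ℝ E]
  [MeasurableSpace E] [BorelSpace E] (μ : Measure E) [μ.IsAddHaarMeasure]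

theorem lintegral_scale (f : E → ℝ≥0∞) {r : ℝ} (hr : 0 < r) :
    ∫⁻ x, f x ∂μ = ENNReal.ofReal (r ^ Module.finrank ℝ E) * ∫⁻ x, f (r • x) ∂μ := by
  have h1 := Measure.map_addHaar_smul μ hr.ne'
  have h2 : ∫⁻ x, f x ∂(Measure.map (r • ·) μ) = ∫⁻ x, f (r • x) ∂μ :=
    (Homeomorph.smulOfNeZero r hr.ne').measurableEmbedding.lintegral_map f
  rw [← h2, h1, lintegral_smul_measure, smul_eq_mul, ← mul_assoc, ← ENNReal.ofReal_mul (by positivity),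
    abs_of_pos (by positivity), mul_inv_cancel₀ (by positivity), ENNReal.ofReal_one, one_mul]

theorem lintegral_quad {q : E → ℝ} (hq : ∀ (t : ℝ) x, q (t • x) = t ^ 2 * q x) {v : ℝ} (hv : 0 < v) :
    ∫⁻ x, ENNReal.ofReal (Real.exp (-q x / (2 * v))) ∂μ =
      ENNReal.ofReal (√v ^ Module.finrank ℝ E) * ∫⁻ x, ENNReal.ofReal (Real.exp (-q x / 2)) ∂μ := by
  rw [lintegral_scale μ _ (Real.sqrt_pos.2 hv)]
  congr 1
  apply lintegral_congr
  intro x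
  rw [hq, Real.sq_sqrt hv.le]
  congr 2
  field_simp

theorem lintegral_full {q Q : E → ℝ} {x₀ : E} {Qh : ℝ}
    (hq : ∀ (t : ℝ) x, q (t • x) = t ^ 2 * q x) (hQ : ∀ x, Q x = Qh + q (x - x₀))
    {v : ℝ} (hv : 0 < v) :
    ∫⁻ x, ENNReal.ofReal (Real.exp (-Q x / (2 * v))) ∂μ =
      ENNReal.ofReal (Real.exp (-Qh / (2 * v)) * √v ^ Module.finrank ℝ E) *
        ∫⁻ x, ENNReal.ofReal (Real.exp (-q x / 2)) ∂μ := by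
  have h1 : ∀ x, ENNReal.ofReal (Real.exp (-Q x / (2 * v))) = ENNReal.ofReal (Real.exp (-Qh / (2 * v)))
      * ENNReal.ofReal (Real.exp (-q (x - x₀) / (2 * v))) := by
    intro x
    rw [← ENNReal.ofReal_mul (by positivity), ← Real.exp_add, hQ]
    congr 2; ring
  simp only [h1]
  rw [lintegral_const_mul' _ _ ENNReal.ofReal_ne_top,
    lintegral_sub_right_eq_self (fun x => ENNReal.ofReal (Real.exp (-q x / (2 * v)))) x₀,
    lintegral_quad μ hq hv, ENNReal.ofReal_mul (by positivity), mul_assoc]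

theorem lintegral_tail {q Q : E → ℝ} {x₀ : E} {Qh T : ℝ} (hqc : Continuous q)
    (hq : ∀ (t : ℝ) x, q (t • x) = t ^ 2 * q x) (hQ : ∀ x, Q x = Qh + q (x - x₀))
    {v : ℝ} (hv : 0 < v) :
    ∫⁻ x in {x | T < q (x - x₀)}, ENNReal.ofReal (Real.exp (-Q x / (2 * v))) ∂μ ≤
      ENNReal.ofReal (Real.exp (-T / (4 * v)) * √2 ^ Module.finrank ℝ E) *
      (ENNReal.ofReal (Real.exp (-Qh / (2 * v)) * √v ^ Module.finrank ℝ E) *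
        ∫⁻ x, ENNReal.ofReal (Real.exp (-q x / 2)) ∂μ) := by
  have hms : MeasurableSet {x | T < q (x - x₀)} :=
    measurableSet_lt measurable_const (hqc.comp (continuous_id.sub continuous_const)).measurable
  have h1 : ∀ x ∈ {x | T < q (x - x₀)}, ENNReal.ofReal (Real.exp (-Q x / (2 * v))) ≤
      ENNReal.ofReal (Real.exp (-T / (4 * v)) * Real.exp (-Qh / (2 * v)))
      * ENNReal.ofReal (Real.exp (-q (x - x₀) / (2 * (2 * v)))) := by
    intro x hx
    rw [← ENNReal.ofReal_mul (by positivity), ← Real.exp_add, ← Real.exp_add, hQ]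
    apply ENNReal.ofReal_le_ofReal
    apply Real.exp_le_exp.2
    have hx' : T < q (x - x₀) := hx
    have e : -(Qh + q (x - x₀)) / (2 * v) = -Qh / (2 * v) + - q (x - x₀) / (4 * v) +
      - q (x - x₀) / (2 * (2 * v)) := by field_simp; ring
    rw [e]
    have : - q (x - x₀) / (4 * v) ≤ - T / (4 * v) := by gcongr
    linarith
  refine (setLIntegral_mono' hms h1).trans ?_
  refine (setLIntegral_le_lintegral _ _).trans ?_
  rw [lintegral_const_mul' _ _ ENNReal.ofReal_ne_top,
    lintegral_sub_right_eq_self (fun x => ENNReal.ofReal (Real.exp (-q x / (2 * (2 * v))))) x₀,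
    lintegral_quad μ hq (by positivity : 0 < 2 * v), ← mul_assoc, ← mul_assoc,
    ← ENNReal.ofReal_mul (by positivity), ← ENNReal.ofReal_mul (by positivity)]
  rw [Real.sqrt_mul (by norm_num), mul_pow]
  apply le_of_eq
  congr 2
  ring

/-- The unnormalised weight of the variance parameter. -/
def Wv (c a b : ℝ) (n D : ℕ) (v : ℝ) : ℝ :=
  c * v ^ (-a / 2 - 1) * Real.exp (-b / (2 * v)) * ((√v * √(2 * π))⁻¹) ^ n *
    ((√(2 * π * ((n : ℝ) ^ 2 * v)))⁻¹) ^ D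

theorem Wv_scale {c a b Qh V : ℝ} {n D : ℕ} (hc : 0 < c) (ha : 0 ≤ a) (hS : 0 ≤ b + Qh) (hV : 0 < V)
    {v : ℝ} (hv : V / 2 < v) :
    2 * (Wv c a b n D (2 * v) * (Real.exp (-Qh / (2 * (2 * v))) * √(2 * v) ^ D)) ≤
      ((√2)⁻¹ ^ n * Real.exp ((b + Qh) / (2 * V))) *
        (Wv c a b n D v * (Real.exp (-Qh / (2 * v)) * √v ^ D)) := by
  have hv0 : 0 < v := by linarith
  unfold Wv
  have e1 : (2 * v) ^ (-a / 2 - 1) = 2 ^ (-a / 2 - 1) * v ^ (-a / 2 - 1) :=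
    Real.mul_rpow (by norm_num) hv0.le
  have e2 : √(2 * v) = √2 * √v := Real.sqrt_mul (by norm_num) _
  have e3 : √(2 * π * ((n : ℝ) ^ 2 * (2 * v))) = √2 * √(2 * π * ((n : ℝ) ^ 2 * v)) := by
    rw [← Real.sqrt_mul (by norm_num)]; congr 1; ring
  rw [e1, e2, e3]
  have e4 : Real.exp (-b / (2 * (2 * v))) * Real.exp (-Qh / (2 * (2 * v))) ≤
      Real.exp ((b + Qh) / (2 * V)) * (Real.exp (-b / (2 * v)) * Real.exp (-Qh / (2 * v))) := by
    rw [← Real.exp_add, ← Real.exp_add, ← Real.exp_add]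
    apply Real.exp_le_exp.2
    have : (b + Qh) / (2 * (2 * v)) ≤ (b + Qh) / (2 * V) := by
      apply div_le_div_of_nonneg_left hS (by positivity) (by linarith)
    have e : -b / (2 * (2 * v)) + -Qh / (2 * (2 * v)) =
      (b + Qh) / (2 * (2 * v)) + (-b / (2 * v) + -Qh / (2 * v)) := by field_simp; ring
    linarith
  have e5 : 2 * (2 : ℝ) ^ (-a / 2 - 1) ≤ 1 := by
    have : (2 : ℝ) ^ (-a / 2 - 1) ≤ 2 ^ (-1 : ℝ) :=
      Real.rpow_le_rpow_of_exponent_le (by norm_num) (by linarith)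
    rw [Real.rpow_neg_one] at this
    linarith
  have e6 : ((√2 * √(2 * π * ((n : ℝ) ^ 2 * v)))⁻¹) ^ D * (√2 * √v) ^ D =
     ((√(2 * π * ((n : ℝ) ^ 2 * v)))⁻¹) ^ D * √v ^ D := by
    rw [← mul_pow, ← mul_pow]
    congr 1
    have : √2 ≠ 0 := by positivity
    field_simp
  have e7 : ((√2 * √v * √(2 * π))⁻¹) ^ n = (√2)⁻¹ ^ n * ((√v * √(2 * π))⁻¹) ^ n := by
    rw [← mul_pow]; congr 1; rw [mul_assoc, mul_inv]
  rw [e7]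
  calc _ = (2 * (2 : ℝ) ^ (-a / 2 - 1)) * ((Real.exp (-b / (2 * (2 * v))) * Real.exp (-Qh / (2 * (2 * v)))) *
        (c * v ^ (-a / 2 - 1) * ((√2)⁻¹ ^ n * ((√v * √(2 * π))⁻¹) ^ n) *
        (((√2 * √(2 * π * ((n : ℝ) ^ 2 * v)))⁻¹) ^ D * (√2 * √v) ^ D))) := by ring
    _ ≤ 1 * ((Real.exp ((b + Qh) / (2 * V)) * (Real.exp (-b / (2 * v)) * Real.exp (-Qh / (2 * v)))) *
        (c * v ^ (-a / 2 - 1) * ((√2)⁻¹ ^ n * ((√v * √(2 * π))⁻¹) ^ n) *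
        (((√2 * √(2 * π * ((n : ℝ) ^ 2 * v)))⁻¹) ^ D * (√2 * √v) ^ D))) := by
      gcongr
    _ = _ := by rw [e6]; ring

theorem Wv_tail {c a b Qh V : ℝ} {n D : ℕ} (hc : 0 < c) (ha : 0 ≤ a) (hS : 0 ≤ b + Qh) (hV : 0 < V) :
    ∫⁻ v in Set.Ioi V, ENNReal.ofReal (Wv c a b n D v * (Real.exp (-Qh / (2 * v)) * √v ^ D)) ≤
      ENNReal.ofReal ((√2)⁻¹ ^ n * Real.exp ((b + Qh) / (2 * V))) *
      ∫⁻ v in Set.Ioi 0, ENNReal.ofReal (Wv c a b n D v * (Real.exp (-Qh / (2 * v)) * √v ^ D)) := by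
  set F : ℝ → ℝ := fun v => Wv c a b n D v * (Real.exp (-Qh / (2 * v)) * √v ^ D) with hF
  rw [← lintegral_indicator measurableSet_Ioi, ← lintegral_indicator measurableSet_Ioi,
    lintegral_scale volume _ (r := 2) (by norm_num), ← lintegral_const_mul' _ _ ENNReal.ofReal_ne_top,
    ← lintegral_const_mul' _ _ ENNReal.ofReal_ne_top]
  apply lintegral_mono
  intro v
  by_cases hv : V < 2 * v
  · have hv0 : 0 < v := by linarith
    simp only [smul_eq_mul, Module.finrank_self, pow_one]
    rw [Set.indicator_of_mem (by exact hv), Set.indicator_of_mem (by exact hv0),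
      ← ENNReal.ofReal_mul (by norm_num), ← ENNReal.ofReal_mul (by positivity)]
    apply ENNReal.ofReal_le_ofReal
    exact Wv_scale hc ha hS hV (by linarith)
  · simp only [smul_eq_mul]
    rw [Set.indicator_of_notMem (by exact hv)]
    simp

theorem core_bound {q Q : E → ℝ} {x₀ : E} {Qh T V c a b : ℝ} {n D : ℕ} (hqc : Continuous q)
    (hq : ∀ (t : ℝ) x, q (t • x) = t ^ 2 * q x) (hQ : ∀ x, Q x = Qh + q (x - x₀))
    (hD : D = Module.finrank ℝ E)
    (hc : 0 < c) (ha : 0 ≤ a) (hS : 0 ≤ b + Qh) (hV : 0 < V) (hT : 0 ≤ T) :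
    ∫⁻ v in Set.Ioi 0, ENNReal.ofReal (Wv c a b n D v) *
        ∫⁻ x in {x | V < v ∨ T < q (x - x₀)}, ENNReal.ofReal (Real.exp (-Q x / (2 * v))) ∂μ ≤
      ENNReal.ofReal ((√2)⁻¹ ^ n * Real.exp ((b + Qh) / (2 * V)) + Real.exp (-T / (4 * V)) * √2 ^ D) *
      ∫⁻ v in Set.Ioi 0, ENNReal.ofReal (Wv c a b n D v) *
        ∫⁻ x, ENNReal.ofReal (Real.exp (-Q x / (2 * v))) ∂μ := by
  subst hD
  set D := Module.finrank ℝ E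
  set G := ∫⁻ x, ENNReal.ofReal (Real.exp (-q x / 2)) ∂μ with hG
  set F : ℝ → ℝ := fun v => Wv c a b n D v * (Real.exp (-Qh / (2 * v)) * √v ^ D) with hF
  have hW : ∀ v : ℝ, 0 < v → 0 ≤ Wv c a b n D v := by
    intro v hv; unfold Wv; positivity
  have hFm : Measurable fun v => ENNReal.ofReal (F v) := by
    simp only [hF, Wv]
    fun_prop
  have hfull : ∫⁻ v in Set.Ioi 0, ENNReal.ofReal (Wv c a b n D v) *
        ∫⁻ x, ENNReal.ofReal (Real.exp (-Q x / (2 * v))) ∂μ =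
        (∫⁻ v in Set.Ioi 0, ENNReal.ofReal (F v)) * G := by
    rw [← lintegral_mul_const _ hFm]
    apply setLIntegral_congr_fun measurableSet_Ioi
    intro v hv
    have hv' : 0 < v := hv
    simp only
    rw [lintegral_full μ hq hQ hv', ← mul_assoc, ← ENNReal.ofReal_mul (hW v hv')]
  rw [hfull]
  have hpt : ∀ v ∈ Set.Ioi (0 : ℝ), ENNReal.ofReal (Wv c a b n D v) *
        ∫⁻ x in {x | V < v ∨ T < q (x - x₀)}, ENNReal.ofReal (Real.exp (-Q x / (2 * v))) ∂μ ≤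
        (Set.Ioi V).indicator (fun v => ENNReal.ofReal (F v)) v * G +
        ENNReal.ofReal (Real.exp (-T / (4 * V)) * √2 ^ D) * (ENNReal.ofReal (F v) * G) := by
    intro v hv
    have hv' : 0 < v := hv
    by_cases hvV : V < v
    · rw [Set.indicator_of_mem (by exact hvV)]
      refine le_trans ?_ le_self_add
      calc _ ≤ ENNReal.ofReal (Wv c a b n D v) *
            ∫⁻ x, ENNReal.ofReal (Real.exp (-Q x / (2 * v))) ∂μ := by
            gcongr; exact Measure.restrict_le_self
        _ = _ := by rw [lintegral_full μ hq hQ hv', ← mul_assoc, ← ENNReal.ofReal_mul (hW v hv')]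
    · rw [Set.indicator_of_notMem (by exact hvV), zero_mul, zero_add]
      simp only [hvV, false_or]
      calc _ ≤ ENNReal.ofReal (Wv c a b n D v) * (ENNReal.ofReal (Real.exp (-T / (4 * V)) * √2 ^ D) *
          (ENNReal.ofReal (Real.exp (-Qh / (2 * v)) * √v ^ D) * G)) := by
            gcongr
            refine (lintegral_tail μ hqc hq hQ hv').trans ?_
            push Not at hvV
            have hx : -T / (4 * v) ≤ -T / (4 * V) := by
              rw [neg_div, neg_div]
              apply neg_le_neg
              gcongr
            apply mul_le_mul_left
            apply ENNReal.ofReal_le_ofReal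
            apply mul_le_mul_of_nonneg_right _ (by positivity)
            exact Real.exp_le_exp.2 hx
        _ = _ := by
          rw [mul_left_comm, ← mul_assoc (ENNReal.ofReal (Wv c a b n D v)),
            ← ENNReal.ofReal_mul (hW v hv')]
  refine (setLIntegral_mono' measurableSet_Ioi hpt).trans ?_
  rw [lintegral_add_right _ (by fun_prop)]
  rw [lintegral_const_mul' _ _ ENNReal.ofReal_ne_top, lintegral_mul_const _ hFm,
    lintegral_mul_const _ (hFm.indicator measurableSet_Ioi), lintegral_indicator measurableSet_Ioi,
    Measure.restrict_restrict measurableSet_Ioi]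
  have : Set.Ioi V ∩ Set.Ioi 0 = Set.Ioi V := by
    ext x; simp only [Set.mem_inter_iff, Set.mem_Ioi]; constructor
    · exact fun h => h.1
    · exact fun h => ⟨h, by linarith⟩
  rw [this, ENNReal.ofReal_add (by positivity) (by positivity), add_mul]
  apply add_le_add_left
  rw [← mul_assoc]
  apply mul_le_mul_left
  exact Wv_tail hc ha hS hV
end core

theorem pi_withDensity' {ι : Type*} [Fintype ι] {X : Type*} [MeasurableSpace X]
    (μ : Measure X) [SigmaFinite μ] (f : X → ℝ) (hfm : Measurable f) (hf0 : ∀ x, 0 ≤ f x)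
    (hf : Integrable f μ) :
    Measure.pi (fun _ : ι => μ.withDensity fun x => ENNReal.ofReal (f x)) =
      (Measure.pi fun _ : ι => μ).withDensity fun x => ENNReal.ofReal (∏ i, f (x i)) := by
  haveI : IsFiniteMeasure (μ.withDensity fun x => ENNReal.ofReal (f x)) :=
    isFiniteMeasure_withDensity_ofReal hf.2
  apply Measure.pi_eq
  intro s hs
  rw [withDensity_apply _ (MeasurableSet.univ_pi hs), Measure.restrict_pi_pi]
  have hint : Integrable (fun x : ι → X => ∏ i, f (x i)) (Measure.pi fun i => μ.restrict (s i)) :=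
    Integrable.fintype_prod (f := fun _ => f) (fun i => hf.restrict)
  rw [← ofReal_integral_eq_lintegral_ofReal hint
    (Filter.Eventually.of_forall fun x => Finset.prod_nonneg fun i _ => hf0 _),
    integral_fintype_prod_eq_prod (f := fun _ => f),
    ENNReal.ofReal_prod_of_nonneg (fun i _ => integral_nonneg hf0)]
  apply Finset.prod_congr rfl
  intro i _
  rw [withDensity_apply _ (hs i), ofReal_integral_eq_lintegral_ofReal hf.restrict
    (Filter.Eventually.of_forall hf0)]

/-- Conditional prior of the coefficients. -/
def condPrior (κ τ : Type*) [Fintype κ] [Fintype τ] (w : ℝ) : Measure (κ → τ → ℝ) :=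
  Measure.pi fun _ : κ => Measure.pi fun _ : τ =>
    ProbabilityTheory.gaussianReal 0 (Real.toNNReal w)

theorem condPrior_eq (κ τ : Type*) [Fintype κ] [Fintype τ] {w : ℝ} (hw : 0 < w) :
    condPrior κ τ w = (volume : Measure (κ → τ → ℝ)).withDensity fun ξ =>
      ENNReal.ofReal (∏ k, ∏ s, ProbabilityTheory.gaussianPDFReal 0 (Real.toNNReal w) (ξ k s)) := by
  have hw' : Real.toNNReal w ≠ 0 := by simpa using hw
  unfold condPrior
  rw [ProbabilityTheory.gaussianReal_of_var_ne_zero 0 hw']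
  have e1 : ProbabilityTheory.gaussianPDF 0 (Real.toNNReal w) =
    fun x => ENNReal.ofReal (ProbabilityTheory.gaussianPDFReal 0 (Real.toNNReal w) x) := rfl
  have hi := ProbabilityTheory.integrable_gaussianPDFReal 0 (Real.toNNReal w)
  have hm := ProbabilityTheory.measurable_gaussianPDFReal 0 (Real.toNNReal w)
  have h0 := ProbabilityTheory.gaussianPDFReal_nonneg 0 (Real.toNNReal w)
  rw [e1, pi_withDensity' (ι := τ) volume _ hm h0 hi]
  rw [pi_withDensity' (ι := κ) (Measure.pi fun _ : τ => (volume : Measure ℝ))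
    (fun x => ∏ s, ProbabilityTheory.gaussianPDFReal 0 (Real.toNNReal w) (x s))
    (Finset.measurable_prod _ fun i _ => hm.comp (measurable_pi_apply i))
    (fun x => Finset.prod_nonneg fun i _ => h0 _)
    (Integrable.fintype_prod (f := fun _ => _) (fun i => hi))]
  rfl

theorem prior_lintegral {α : ℝ} {p m n : ℕ} (hn : 0 < n) {πv : Measure ℝ} {c a b : ℝ}
    (hc : 0 < c)
    (hπv : πv = (volume.restrict (Set.Ioi (0 : ℝ))).withDensity
      fun v => ENNReal.ofReal (c * v ^ (-a / 2 - 1) * Real.exp (-b / (2 * v))))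
    (hAE : AEMeasurable (fun v => (condPrior (Fin p → Fin (Kn α p n)) (Fin p → Fin (m + 1))
      ((n : ℝ) ^ 2 * v)).prod (Measure.dirac v)) πv)
    (F : ((Fin p → Fin (Kn α p n)) → (Fin p → Fin (m + 1)) → ℝ) × ℝ → ℝ≥0∞) (hF : Measurable F) :
    ∫⁻ θ, F θ ∂(fixedPrior α p m n πv) =
      ∫⁻ v in Set.Ioi 0, ENNReal.ofReal (c * v ^ (-a / 2 - 1) * Real.exp (-b / (2 * v))) *
        ∫⁻ ξ, ENNReal.ofReal (∏ k, ∏ s, ProbabilityTheory.gaussianPDFReal 0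
          (Real.toNNReal ((n : ℝ) ^ 2 * v)) (ξ k s)) * F (ξ, v) := by
  have e1 : fixedPrior α p m n πv = πv.bind fun v => (condPrior (Fin p → Fin (Kn α p n))
    (Fin p → Fin (m + 1)) ((n : ℝ) ^ 2 * v)).prod (Measure.dirac v) := rfl
  rw [e1, Measure.lintegral_bind hAE hF.aemeasurable]
  conv_lhs => rw [hπv]
  rw [lintegral_withDensity_eq_lintegral_mul_non_measurable _ (by fun_prop)
    (Filter.Eventually.of_forall fun x => ENNReal.ofReal_lt_top)]
  apply setLIntegral_congr_fun measurableSet_Ioi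
  intro v hv
  have hv' : 0 < v := hv
  simp only [Pi.mul_apply]
  congr 1
  have hn' : (0 : ℝ) < n := by exact_mod_cast hn
  rw [condPrior_eq _ _ (by positivity : 0 < (n : ℝ) ^ 2 * v)]
  haveI : SFinite ((volume : Measure ((Fin p → Fin (Kn α p n)) → (Fin p → Fin (m + 1)) → ℝ)).withDensity
      fun ξ => ENNReal.ofReal (∏ k, ∏ s, ProbabilityTheory.gaussianPDFReal 0
        (Real.toNNReal ((n : ℝ) ^ 2 * v)) (ξ k s))) := inferInstance
  rw [lintegral_prod _ hF.aemeasurable]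
  have e2 : ∀ ξ, ∫⁻ y, F (ξ, y) ∂(Measure.dirac v) = F (ξ, v) := fun ξ =>
    lintegral_dirac' v (hF.comp measurable_prodMk_left)
  simp only [e2]
  rw [lintegral_withDensity_eq_lintegral_mul_non_measurable _ _
    (Filter.Eventually.of_forall fun x => ENNReal.ofReal_lt_top)]
  · rfl
  · have hm := ProbabilityTheory.measurable_gaussianPDFReal 0 (Real.toNNReal ((n : ℝ) ^ 2 * v))
    apply Measurable.ennreal_ofReal
    apply Finset.measurable_prod _ fun k _ => ?_
    apply Finset.measurable_prod _ fun s _ => ?_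
    exact hm.comp ((measurable_pi_apply s).comp (measurable_pi_apply k))

theorem gaussD_nonneg {σ : ℝ} (h : 0 ≤ σ) (t : ℝ) : 0 ≤ gaussD σ t := by
  unfold gaussD; positivity

theorem density_mul {κ τ : Type*} [Fintype κ] [Fintype τ] {n : ℕ} (hn : 0 < n) {v : ℝ} (hv : 0 < v)
    (ξ : κ → τ → ℝ) (d : Fin n → ℝ) :
    (∏ k, ∏ s, ProbabilityTheory.gaussianPDFReal 0 (Real.toNNReal ((n : ℝ) ^ 2 * v)) (ξ k s)) *
      ∏ i, gaussD (√v) (d i) =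
    (((√v * √(2 * π))⁻¹) ^ n * ((√(2 * π * ((n : ℝ) ^ 2 * v)))⁻¹) ^ (Fintype.card κ * Fintype.card τ)) *
      Real.exp (-(∑ i, (d i) ^ 2 + ((n : ℝ) ^ 2)⁻¹ * ∑ k, ∑ s, ξ k s ^ 2) / (2 * v)) := by
  have hn' : (0 : ℝ) < n := by exact_mod_cast hn
  have hw : 0 ≤ (n : ℝ) ^ 2 * v := by positivity
  unfold gaussD ProbabilityTheory.gaussianPDFReal
  simp only [Finset.prod_mul_distrib, Real.coe_toNNReal _ hw, Finset.prod_const, Finset.card_univ,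
    Fintype.card_fin, ← Real.exp_sum, sub_zero, Real.sq_sqrt hv.le]
  rw [pow_right_comm, ← pow_mul]
  have : -(∑ i, (d i) ^ 2 + ((n : ℝ) ^ 2)⁻¹ * ∑ k, ∑ s, ξ k s ^ 2) / (2 * v) =
      ∑ k, ∑ s, -(ξ k s) ^ 2 / (2 * ((n : ℝ) ^ 2 * v)) + ∑ i, -(d i) ^ 2 / (2 * v) := by
    simp only [← Finset.sum_div, Finset.sum_neg_distrib]
    field_simp
    ring
  rw [this, Real.exp_add]
  rw [mul_comm (Fintype.card κ)]
  ring

theorem post_bound {α : ℝ} {p m n : ℕ} (hn : 0 < n) {πv : Measure ℝ} {c a b : ℝ}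
    (hc : 0 < c) (ha : 0 ≤ a)
    (hπv : πv = (volume.restrict (Set.Ioi (0 : ℝ))).withDensity
      fun v => ENNReal.ofReal (c * v ^ (-a / 2 - 1) * Real.exp (-b / (2 * v))))
    (Y : Fin n → ℝ) (g : Fin n → ((Fin p → Fin (Kn α p n)) → (Fin p → Fin (m + 1)) → ℝ) → ℝ)
    (hg : ∀ i, Continuous (g i))
    (q : ((Fin p → Fin (Kn α p n)) → (Fin p → Fin (m + 1)) → ℝ) → ℝ) (hqc : Continuous q)
    (hq : ∀ (t : ℝ) x, q (t • x) = t ^ 2 * q x)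
    (x₀ : (Fin p → Fin (Kn α p n)) → (Fin p → Fin (m + 1)) → ℝ) {Qh T V : ℝ}
    (hQ : ∀ ξ, ∑ i, (Y i - g i ξ) ^ 2 + ((n : ℝ) ^ 2)⁻¹ * ∑ k, ∑ s, ξ k s ^ 2 = Qh + q (ξ - x₀))
    (hS : 0 ≤ b + Qh) (hV : 0 < V) (hT : 0 ≤ T)
    (A : Set (((Fin p → Fin (Kn α p n)) → (Fin p → Fin (m + 1)) → ℝ) × ℝ)) (hA : MeasurableSet A)
    (hAs : ∀ θ ∈ A, T < q (θ.1 - x₀)) :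
    postGen (fixedPrior α p m n πv) (fun θ => ∏ i, gaussD (√θ.2) (Y i - g i θ.1)) A ≤
      (√2)⁻¹ ^ n * Real.exp ((b + Qh) / (2 * V)) + Real.exp (-T / (4 * V)) *
        √2 ^ (Fintype.card (Fin p → Fin (Kn α p n)) * Fintype.card (Fin p → Fin (m + 1))) := by
  set D := Fintype.card (Fin p → Fin (Kn α p n)) * Fintype.card (Fin p → Fin (m + 1)) with hD
  set ρ := (√2)⁻¹ ^ n * Real.exp ((b + Qh) / (2 * V)) + Real.exp (-T / (4 * V)) * √2 ^ D with hρ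
  have hρ0 : 0 ≤ ρ := by positivity
  set P := fixedPrior α p m n πv with hP
  set L : ((Fin p → Fin (Kn α p n)) → (Fin p → Fin (m + 1)) → ℝ) × ℝ → ℝ :=
    fun θ => ∏ i, gaussD (√θ.2) (Y i - g i θ.1) with hL
  have hL0 : ∀ θ, 0 ≤ L θ := fun θ => Finset.prod_nonneg fun i _ => gaussD_nonneg (Real.sqrt_nonneg _) _
  have hLm : Measurable L := by
    apply Finset.measurable_prod _ fun i _ => ?_
    have := (hg i).measurable
    unfold gaussD
    fun_prop
  by_cases hAE : AEMeasurable (fun v => (condPrior (Fin p → Fin (Kn α p n)) (Fin p → Fin (m + 1))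
      ((n : ℝ) ^ 2 * v)).prod (Measure.dirac v)) πv
  swap
  · have hP0 : P = 0 := by
      have : Measure.map (fun v => (condPrior (Fin p → Fin (Kn α p n)) (Fin p → Fin (m + 1))
        ((n : ℝ) ^ 2 * v)).prod (Measure.dirac v)) πv = 0 := Measure.map_of_not_aemeasurable hAE
      change Measure.join (Measure.map (fun v => (condPrior (Fin p → Fin (Kn α p n))
        (Fin p → Fin (m + 1)) ((n : ℝ) ^ 2 * v)).prod (Measure.dirac v)) πv) = 0
      rw [this, Measure.join_zero]
    unfold postGen
    rw [hP0]
    simpa using hρ0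
  have hkey : ∫⁻ θ in A, ENNReal.ofReal (L θ) ∂P ≤ ENNReal.ofReal ρ * ∫⁻ θ, ENNReal.ofReal (L θ) ∂P := by
    rw [← lintegral_indicator hA, hP,
      prior_lintegral hn hc hπv hAE _ (hLm.ennreal_ofReal.indicator hA),
      prior_lintegral hn hc hπv hAE _ (hLm.ennreal_ofReal)]
    have hfin : D = Module.finrank ℝ ((Fin p → Fin (Kn α p n)) → (Fin p → Fin (m + 1)) → ℝ) := by
      rw [Module.finrank_pi_fintype]
      simp only [Module.finrank_fintype_fun_eq_card, Finset.sum_const, Finset.card_univ, smul_eq_mul, hD]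
    have hcore := core_bound (volume : Measure ((Fin p → Fin (Kn α p n)) → (Fin p → Fin (m + 1)) → ℝ))
      (n := n) hqc hq hQ hfin hc ha hS hV hT
    have hLd : ∀ v : ℝ, 0 < v → ∀ ξ, ENNReal.ofReal (∏ k, ∏ s, ProbabilityTheory.gaussianPDFReal 0
          (Real.toNNReal ((n : ℝ) ^ 2 * v)) (ξ k s)) * ENNReal.ofReal (L (ξ, v)) =
        ENNReal.ofReal (((√v * √(2 * π))⁻¹) ^ n * ((√(2 * π * ((n : ℝ) ^ 2 * v)))⁻¹) ^ D) *
        ENNReal.ofReal (Real.exp (-(∑ i, (Y i - g i ξ) ^ 2 + ((n : ℝ) ^ 2)⁻¹ * ∑ k, ∑ s, ξ k s ^ 2)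
          / (2 * v))) := by
      intro v hv ξ
      rw [← ENNReal.ofReal_mul (Finset.prod_nonneg fun k _ => Finset.prod_nonneg fun s _ =>
        ProbabilityTheory.gaussianPDFReal_nonneg _ _ _), ← ENNReal.ofReal_mul (by positivity),
        density_mul hn hv]
    have hWd : ∀ v : ℝ, 0 < v → ENNReal.ofReal (c * v ^ (-a / 2 - 1) * Real.exp (-b / (2 * v))) *
        ENNReal.ofReal (((√v * √(2 * π))⁻¹) ^ n * ((√(2 * π * ((n : ℝ) ^ 2 * v)))⁻¹) ^ D) =
        ENNReal.ofReal (Wv c a b n D v) := by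
      intro v hv
      rw [← ENNReal.ofReal_mul (by positivity)]
      unfold Wv
      congr 1; ring
    refine le_trans ?_ (hcore.trans (le_of_eq ?_))
    · apply setLIntegral_mono' measurableSet_Ioi
      intro v hv
      have hv' : 0 < v := hv
      rw [← hWd v hv', mul_assoc (ENNReal.ofReal _)]
      refine mul_le_mul' le_rfl ?_
      have hms : MeasurableSet {x | V < v ∨ T < q (x - x₀)} := by
        apply MeasurableSet.union
        · exact MeasurableSet.const _
        · exact measurableSet_lt measurable_const
            (hqc.comp (continuous_id.sub continuous_const)).measurable
      rw [← lintegral_indicator hms, ← lintegral_const_mul' _ _ ENNReal.ofReal_ne_top]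
      apply lintegral_mono
      intro ξ
      simp only
      by_cases hmem : (ξ, v) ∈ A
      · have hmem2 : ξ ∈ {x | V < v ∨ T < q (x - x₀)} := Or.inr (hAs _ hmem)
        rw [Set.indicator_of_mem hmem, Set.indicator_of_mem hmem2, hLd v hv']
      · rw [Set.indicator_of_notMem hmem, mul_zero]
        exact zero_le
    · congr 1
      apply setLIntegral_congr_fun measurableSet_Ioi
      intro v hv
      have hv' : 0 < v := hv
      simp only
      rw [← hWd v hv', mul_assoc (ENNReal.ofReal _), ← lintegral_const_mul' _ _ ENNReal.ofReal_ne_top]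
      congr 1
      apply lintegral_congr
      intro ξ
      rw [hLd v hv']
  unfold postGen
  rw [integral_eq_lintegral_of_nonneg_ae (Filter.Eventually.of_forall hL0) hLm.aestronglyMeasurable,
    integral_eq_lintegral_of_nonneg_ae (Filter.Eventually.of_forall hL0) hLm.aestronglyMeasurable]
  by_cases htop : ∫⁻ θ, ENNReal.ofReal (L θ) ∂P = ∞
  · rw [htop]; simpa using hρ0
  · apply div_le_of_le_mul₀ ENNReal.toReal_nonneg hρ0
    have := ENNReal.toReal_mono (ENNReal.mul_ne_top ENNReal.ofReal_ne_top htop) hkey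
    rwa [ENNReal.toReal_mul, ENNReal.toReal_ofReal hρ0] at this

theorem ridge_exists {κ τ : Type*} [Fintype κ] [Fintype τ] {n : ℕ}
    (Ψ : (κ → τ → ℝ) →ₗ[ℝ] (Fin n → ℝ)) {lam : ℝ} (hl : 0 < lam) (Y : Fin n → ℝ) :
    ∃ x₀ : κ → τ → ℝ, ∀ η, ∑ i, (Ψ x₀ i - Y i) * Ψ η i + lam * ∑ k, ∑ s, x₀ k s * η k s = 0 := by
  let T : (κ → τ → ℝ) →ₗ[ℝ] Module.Dual ℝ (κ → τ → ℝ) :=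
    LinearMap.mk₂ ℝ (fun ξ η => ∑ i, Ψ ξ i * Ψ η i + lam * ∑ k, ∑ s, ξ k s * η k s)
      (by intro a b c; simp only [map_add, Pi.add_apply, add_mul, Finset.sum_add_distrib]; ring)
      (by intro a b c; simp only [map_smul, Pi.smul_apply, smul_eq_mul, mul_assoc, ← Finset.mul_sum]; ring)
      (by intro a b c; simp only [map_add, Pi.add_apply, mul_add, Finset.sum_add_distrib]; ring)
      (by intro a b c; simp only [map_smul, Pi.smul_apply, smul_eq_mul, mul_left_comm _ a, ← Finset.mul_sum]; ring)
  have hT : ∀ ξ η, T ξ η = ∑ i, Ψ ξ i * Ψ η i + lam * ∑ k, ∑ s, ξ k s * η k s := fun _ _ => rfl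
  have hinj : Function.Injective T := by
    rw [injective_iff_map_eq_zero]
    intro ξ h
    have h1 : T ξ ξ = 0 := by rw [h]; rfl
    rw [hT] at h1
    have h2 : 0 ≤ ∑ i, Ψ ξ i * Ψ ξ i := Finset.sum_nonneg fun i _ => mul_self_nonneg _
    have h3 : ∀ k ∈ Finset.univ, 0 ≤ ∑ s, ξ k s * ξ k s := fun k _ => Finset.sum_nonneg fun i _ => mul_self_nonneg _
    have h4 : 0 ≤ ∑ k, ∑ s, ξ k s * ξ k s := Finset.sum_nonneg h3
    have h5 : ∑ k, ∑ s, ξ k s * ξ k s = 0 := by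
      have : lam * ∑ k, ∑ s, ξ k s * ξ k s ≤ 0 := by linarith
      nlinarith
    funext k s
    have h6 := (Finset.sum_eq_zero_iff_of_nonneg h3).1 h5 k (Finset.mem_univ _)
    have h7 := (Finset.sum_eq_zero_iff_of_nonneg fun i _ => mul_self_nonneg _).1 h6 s (Finset.mem_univ _)
    simpa using h7
  have hsurj : Function.Surjective T :=
    (LinearMap.injective_iff_surjective_of_finrank_eq_finrank (Subspace.dual_finrank_eq).symm).1 hinj
  let l : Module.Dual ℝ (κ → τ → ℝ) :=
    { toFun := fun η => ∑ i, Y i * Ψ η i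
      map_add' := by intro a b; simp only [map_add, Pi.add_apply, mul_add, Finset.sum_add_distrib]
      map_smul' := by
        intro a b
        simp only [map_smul, Pi.smul_apply, smul_eq_mul, mul_left_comm _ a, ← Finset.mul_sum, RingHom.id_apply] }
  obtain ⟨x₀, hx⟩ := hsurj l
  refine ⟨x₀, fun η => ?_⟩
  have h1 : T x₀ η = l η := by rw [hx]
  rw [hT] at h1
  have h2 : l η = ∑ i, Y i * Ψ η i := rfl
  simp only [sub_mul, Finset.sum_sub_distrib]
  linarith

theorem proj_exists {κ τ : Type*} [Fintype κ] [Fintype τ] {n : ℕ}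
    (Ψ : (κ → τ → ℝ) →ₗ[ℝ] (Fin n → ℝ)) :
    ∃ (d : ℕ) (u : Fin d → Fin n → ℝ), d ≤ Fintype.card κ * Fintype.card τ ∧
      (∀ j, ∑ i, u j i ^ 2 = 1) ∧
      ∀ (e : Fin n → ℝ) (η : κ → τ → ℝ),
        (∑ i, e i * Ψ η i) ^ 2 ≤ (∑ j, (∑ i, e i * u j i) ^ 2) * ∑ i, Ψ η i ^ 2 := by
  let Φ : (κ → τ → ℝ) →ₗ[ℝ] EuclideanSpace ℝ (Fin n) :=
    ((WithLp.linearEquiv 2 ℝ (Fin n → ℝ)).symm : (Fin n → ℝ) →ₗ[ℝ] EuclideanSpace ℝ (Fin n)) ∘ₗ Ψ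
  have hΦ : ∀ η i, Φ η i = Ψ η i := fun _ _ => rfl
  let W := LinearMap.range Φ
  let bs := stdOrthonormalBasis ℝ W
  refine ⟨Module.finrank ℝ W, fun j i => (bs j : EuclideanSpace ℝ (Fin n)) i, ?_, ?_, ?_⟩
  · have := LinearMap.finrank_range_le Φ
    rw [Module.finrank_pi_fintype] at this
    simpa only [Module.finrank_fintype_fun_eq_card, Finset.sum_const, Finset.card_univ, smul_eq_mul] using this
  · intro j
    have h1 : ‖(bs j : EuclideanSpace ℝ (Fin n))‖ = 1 := bs.orthonormal.1 j
    have h2 := EuclideanSpace.real_norm_sq_eq (bs j : EuclideanSpace ℝ (Fin n))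
    rw [← h2, h1]; norm_num
  · intro e η
    let w : W := ⟨Φ η, ⟨η, rfl⟩⟩
    have hrep : w = ∑ j, inner ℝ (bs j) w • bs j := (bs.sum_repr' w).symm
    have hin : ∀ j, inner ℝ (bs j) w = ∑ i, (bs j : EuclideanSpace ℝ (Fin n)) i * Ψ η i := by
      intro j
      change inner ℝ (bs j : EuclideanSpace ℝ (Fin n)) (Φ η) = _
      rw [PiLp.inner_apply]
      apply Finset.sum_congr rfl; intro i _
      rw [hΦ]; simp [mul_comm]
    have hpar : ∑ j, (inner ℝ (bs j) w) ^ 2 = ∑ i, Ψ η i ^ 2 := by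
      have h1 := bs.sum_sq_norm_inner_right w
      have h2 : ‖w‖ ^ 2 = ∑ i, Ψ η i ^ 2 := by
        have := EuclideanSpace.real_norm_sq_eq (Φ η)
        exact this
      rw [← h2, ← h1]
      simp
    have hcoord : ∀ i, Ψ η i = ∑ j, inner ℝ (bs j) w * (bs j : EuclideanSpace ℝ (Fin n)) i := by
      intro i
      have h1 : (w : EuclideanSpace ℝ (Fin n)) = ∑ j, inner ℝ (bs j) w • (bs j : EuclideanSpace ℝ (Fin n)) := by
        conv_lhs => rw [hrep]
        simp
      have h2 : (w : EuclideanSpace ℝ (Fin n)) i = Ψ η i := rfl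
      rw [← h2, h1]
      simp
    have h3 : ∑ i, e i * Ψ η i = ∑ j, (∑ i, e i * (bs j : EuclideanSpace ℝ (Fin n)) i) * inner ℝ (bs j) w := by
      simp only [Finset.sum_mul]
      rw [Finset.sum_comm]
      apply Finset.sum_congr rfl; intro i _
      rw [hcoord i, Finset.mul_sum]
      apply Finset.sum_congr rfl; intro j _
      ring
    rw [h3, ← hpar]
    exact Finset.sum_mul_sq_le_sq_mul_sq _ _ _

/-- Deterministic analysis of the ridge estimator. -/
theorem ridge_bounds {κ τ : Type*} [Fintype κ] [Fintype τ] {n : ℕ}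
    (Ψ : (κ → τ → ℝ) →ₗ[ℝ] (Fin n → ℝ)) {lam : ℝ} (hl : 0 < lam) (f e : Fin n → ℝ)
    (xs : κ → τ → ℝ) {E : ℝ} (hE0 : 0 ≤ E)
    (hE : ∀ η : κ → τ → ℝ, (∑ i, e i * Ψ η i) ^ 2 ≤ E * ∑ i, Ψ η i ^ 2) :
    ∃ (x₀ : κ → τ → ℝ) (Qh : ℝ),
      0 ≤ Qh ∧ Qh ≤ ∑ i, (f i + e i) ^ 2 ∧
      (∀ ξ, ∑ i, (f i + e i - Ψ ξ i) ^ 2 + lam * ∑ k, ∑ s, ξ k s ^ 2 = Qh +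
        (∑ i, Ψ (ξ - x₀) i ^ 2 + lam * ∑ k, ∑ s, (ξ - x₀) k s ^ 2)) ∧
      ∀ ξ, ∑ i, (Ψ ξ i - f i) ^ 2 ≤ 3 * (∑ i, Ψ (ξ - x₀) i ^ 2) + 6 * E +
        9 * ∑ i, (f i - Ψ xs i) ^ 2 + 3 * (lam * ∑ k, ∑ s, xs k s ^ 2) := by
  obtain ⟨x₀, hx⟩ := ridge_exists Ψ hl (fun i => f i + e i)
  set Qh := ∑ i, (f i + e i - Ψ x₀ i) ^ 2 + lam * ∑ k, ∑ s, x₀ k s ^ 2 with hQh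
  have hexp : ∀ ξ, ∑ i, (f i + e i - Ψ ξ i) ^ 2 + lam * ∑ k, ∑ s, ξ k s ^ 2 = Qh +
        (∑ i, Ψ (ξ - x₀) i ^ 2 + lam * ∑ k, ∑ s, (ξ - x₀) k s ^ 2) := by
    intro ξ
    have h := hx (ξ - x₀)
    have h1 : ∑ i, (f i + e i - Ψ ξ i) ^ 2 = ∑ i, (f i + e i - Ψ x₀ i) ^ 2
        + ∑ i, Ψ (ξ - x₀) i ^ 2 + 2 * ∑ i, (Ψ x₀ i - (f i + e i)) * Ψ (ξ - x₀) i := by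
      rw [Finset.mul_sum, ← Finset.sum_add_distrib, ← Finset.sum_add_distrib]
      apply Finset.sum_congr rfl; intro i _
      simp only [map_sub, Pi.sub_apply]; ring
    have h2 : ∑ k, ∑ s, ξ k s ^ 2 = ∑ k, ∑ s, x₀ k s ^ 2 + ∑ k, ∑ s, (ξ - x₀) k s ^ 2
        + 2 * ∑ k, ∑ s, x₀ k s * (ξ - x₀) k s := by
      simp only [Finset.mul_sum, ← Finset.sum_add_distrib]
      apply Finset.sum_congr rfl; intro k _
      apply Finset.sum_congr rfl; intro s _
      simp only [Pi.sub_apply]; ring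
    rw [h1, h2, hQh]
    linear_combination 2 * h
  have hQ0 : 0 ≤ Qh := by rw [hQh]; positivity
  refine ⟨x₀, Qh, hQ0, ?_, hexp, ?_⟩
  · have h := hexp 0
    have h1 : 0 ≤ ∑ i, Ψ (0 - x₀) i ^ 2 + lam * ∑ k, ∑ s, (0 - x₀) k s ^ 2 := by positivity
    simp only [map_zero, Pi.zero_apply, sub_zero] at h
    simp at h h1
    linarith
  · intro ξ
    set G := ∑ i, (f i - Ψ xs i) ^ 2 with hG
    set N := ∑ i, Ψ (x₀ - xs) i ^ 2 with hN
    have hG0 : 0 ≤ G := by positivity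
    have hN0 : 0 ≤ N := by positivity
    -- normal equations
    have h := hx (x₀ - xs)
    have hg2 : (∑ i, (f i - Ψ xs i) * Ψ (x₀ - xs) i) ^ 2 ≤ G * N := Finset.sum_mul_sq_le_sq_mul_sq _ _ _
    have he2 := hE (x₀ - xs)
    have h1 : ∑ i, (Ψ x₀ i - (f i + e i)) * Ψ (x₀ - xs) i = N -
        ∑ i, (f i - Ψ xs i) * Ψ (x₀ - xs) i - ∑ i, e i * Ψ (x₀ - xs) i := by
      rw [hN, ← Finset.sum_sub_distrib, ← Finset.sum_sub_distrib]
      apply Finset.sum_congr rfl; intro i _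
      simp only [map_sub, Pi.sub_apply]; ring
    have h2 : -(∑ k, ∑ s, xs k s ^ 2) / 4 ≤ ∑ k, ∑ s, x₀ k s * (x₀ - xs) k s := by
      rw [neg_div, ← sub_nonneg, sub_neg_eq_add, Finset.sum_div]
      simp only [Finset.sum_div, ← Finset.sum_add_distrib]
      apply Finset.sum_nonneg; intro k _
      apply Finset.sum_nonneg; intro s _
      simp only [Pi.sub_apply]
      nlinarith [sq_nonneg (x₀ k s - xs k s / 2)]
    set Z := lam * ∑ k, ∑ s, xs k s ^ 2 with hZ
    have h3 : -Z / 4 ≤ lam * ∑ k, ∑ s, x₀ k s * (x₀ - xs) k s := by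
      have := mul_le_mul_of_nonneg_left h2 hl.le
      rw [hZ]; linarith
    set ge := ∑ i, (f i - Ψ xs i) * Ψ (x₀ - xs) i
    set ee := ∑ i, e i * Ψ (x₀ - xs) i
    have hge : ge ≤ G + N / 4 := by
      apply abs_le_of_sq_le_sq' _ (by positivity) |>.2
      nlinarith [sq_nonneg (G - N / 4)]
    have hee : ee ≤ E + N / 4 := by
      apply abs_le_of_sq_le_sq' _ (by positivity) |>.2
      nlinarith [sq_nonneg (E - N / 4)]
    have hNb : N ≤ 2 * E + 2 * G + Z / 2 := by linarith
    have hf : ∑ i, (Ψ ξ i - f i) ^ 2 ≤ 3 * ((∑ i, Ψ (ξ - x₀) i ^ 2) + N + G) := by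
      rw [hN, hG, ← Finset.sum_add_distrib, ← Finset.sum_add_distrib, Finset.mul_sum]
      apply Finset.sum_le_sum; intro i _
      simp only [map_sub, Pi.sub_apply]
      nlinarith [sq_nonneg ((Ψ ξ i - Ψ x₀ i) - (Ψ x₀ i - Ψ xs i)),
        sq_nonneg ((Ψ ξ i - Ψ x₀ i) + (f i - Ψ xs i)), sq_nonneg ((Ψ x₀ i - Ψ xs i) + (f i - Ψ xs i))]
    have hZ0 : 0 ≤ Z := by positivity
    linarith

/-- Law of the errors. -/
def errLaw (n : ℕ) (v : ℝ≥0) : Measure (Fin n → ℝ) :=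
  Measure.pi fun _ : Fin n => ProbabilityTheory.gaussianReal 0 v

instance (n : ℕ) (v : ℝ≥0) : IsProbabilityMeasure (errLaw n v) := by
  unfold errLaw; infer_instance

theorem errLaw_memLp (n : ℕ) (v : ℝ≥0) (i : Fin n) : MemLp (fun e : Fin n → ℝ => e i) 2 (errLaw n v) :=
  (ProbabilityTheory.memLp_id_gaussianReal (μ := 0) (v := v) 2).comp_measurePreserving
    (measurePreserving_eval (fun _ : Fin n => ProbabilityTheory.gaussianReal 0 v) i)

theorem errLaw_mean (n : ℕ) (v : ℝ≥0) (i : Fin n) : ∫ e, e i ∂(errLaw n v) = 0 := by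
  have h := (measurePreserving_eval (fun _ : Fin n => ProbabilityTheory.gaussianReal 0 v) i)
  have h2 := integral_map (μ := errLaw n v) (φ := fun e : Fin n → ℝ => e i) (f := fun x : ℝ => x)
    (measurable_pi_apply i).aemeasurable (by fun_prop)
  rw [← h2]
  have h3 : Measure.map (fun e : Fin n → ℝ => e i) (errLaw n v) = ProbabilityTheory.gaussianReal 0 v := h.map_eq
  rw [h3, ProbabilityTheory.integral_id_gaussianReal]

theorem errLaw_cross (n : ℕ) (v : ℝ≥0) (i j : Fin n) :
    ∫ e, e i * e j ∂(errLaw n v) = if i = j then (v : ℝ) else 0 := by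
  split_ifs with hij
  · subst hij
    have h := (measurePreserving_eval (fun _ : Fin n => ProbabilityTheory.gaussianReal 0 v) i)
    have h2 := integral_map (μ := errLaw n v) (φ := fun e : Fin n → ℝ => e i) (f := fun x : ℝ => x * x)
      (measurable_pi_apply i).aemeasurable (by fun_prop)
    have h3 : Measure.map (fun e : Fin n → ℝ => e i) (errLaw n v) = ProbabilityTheory.gaussianReal 0 v := h.map_eq
    rw [← h2, h3]
    have h4 := ProbabilityTheory.variance_id_gaussianReal (μ := 0) (v := v)
    rw [ProbabilityTheory.variance_of_integral_eq_zero aemeasurable_id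
      (by simpa using ProbabilityTheory.integral_id_gaussianReal (μ := 0) (v := v))] at h4
    rw [← h4]
    simp [sq]
  · have hind : ProbabilityTheory.iIndepFun (fun i (e : Fin n → ℝ) => e i) (errLaw n v) :=
      ProbabilityTheory.iIndepFun_pi (X := fun _ x => x) (fun i => aemeasurable_id)
    have := (hind.indepFun hij).integral_fun_mul_eq_mul_integral
      (errLaw_memLp n v i).aestronglyMeasurable (errLaw_memLp n v j).aestronglyMeasurable
    rw [this, errLaw_mean, zero_mul]

theorem errLaw_cross_int (n : ℕ) (v : ℝ≥0) (i j : Fin n) :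
    Integrable (fun e => e i * e j) (errLaw n v) :=
  (errLaw_memLp n v i).integrable_mul (errLaw_memLp n v j)

theorem errLaw_quad (n : ℕ) (v : ℝ≥0) (u : Fin n → ℝ) :
    Integrable (fun e => (∑ i, e i * u i) ^ 2) (errLaw n v) ∧
    ∫ e, (∑ i, e i * u i) ^ 2 ∂(errLaw n v) = v * ∑ i, u i ^ 2 := by
  have h : ∀ e : Fin n → ℝ, (∑ i, e i * u i) ^ 2 = ∑ i, ∑ j, (u i * u j) * (e i * e j) := by
    intro e
    rw [sq, Finset.sum_mul_sum]
    apply Finset.sum_congr rfl; intro i _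
    apply Finset.sum_congr rfl; intro j _
    ring
  simp only [h]
  have hi : ∀ i j, Integrable (fun e => (u i * u j) * (e i * e j)) (errLaw n v) :=
    fun i j => (errLaw_cross_int n v i j).const_mul _
  refine ⟨integrable_finset_sum _ fun i _ => integrable_finset_sum _ fun j _ => hi i j, ?_⟩
  rw [integral_finset_sum _ fun i _ => integrable_finset_sum _ fun j _ => hi i j]
  simp_rw [integral_finset_sum _ fun j _ => hi _ j, integral_const_mul, errLaw_cross]
  simp [Finset.mul_sum]
  apply Finset.sum_congr rfl; intro i _; ring

theorem markov_real {Ω : Type*} [MeasurableSpace Ω] {μ : Measure Ω} {f : Ω → ℝ} (hf : Integrable f μ)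
    (h0 : ∀ x, 0 ≤ f x) {t : ℝ} (ht : 0 < t) :
    μ {x | t < f x} ≤ ENNReal.ofReal ((∫ x, f x ∂μ) / t) := by
  have h := mul_meas_ge_le_lintegral₀ (μ := μ) (f := fun x => ENNReal.ofReal (f x))
    hf.aemeasurable.ennreal_ofReal (ENNReal.ofReal t)
  rw [← ofReal_integral_eq_lintegral_ofReal hf (Eventually.of_forall h0)] at h
  have h2 : μ {x | t < f x} ≤ μ {x | ENNReal.ofReal t ≤ ENNReal.ofReal (f x)} :=
    measure_mono fun x hx => ENNReal.ofReal_le_ofReal (le_of_lt hx)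
  rw [ENNReal.ofReal_div_of_pos ht]
  rw [ENNReal.le_div_iff_mul_le (Or.inl (by simpa using ht)) (Or.inl ENNReal.ofReal_ne_top), mul_comm]
  exact (mul_le_mul' le_rfl h2).trans h

theorem errLaw_norm (n : ℕ) (v : ℝ≥0) {t : ℝ} (ht : 0 < t) :
    (errLaw n v) {e | t < ∑ i, e i ^ 2} ≤ ENNReal.ofReal (n * v / t) := by
  have hi : ∀ i : Fin n, Integrable (fun e => e i ^ 2) (errLaw n v) := fun i => by
    simpa [sq] using errLaw_cross_int n v i i
  have h := markov_real (integrable_finset_sum Finset.univ fun i _ => hi i)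
    (fun e => Finset.sum_nonneg fun i _ => sq_nonneg _) ht
  refine h.trans (le_of_eq ?_)
  congr 2
  rw [integral_finset_sum _ fun i _ => hi i]
  have : ∀ i : Fin n, ∫ e, e i ^ 2 ∂(errLaw n v) = v := by
    intro i
    have := errLaw_cross n v i i
    simpa [sq] using this
  simp [this]

theorem errLaw_proj (n : ℕ) (v : ℝ≥0) {d : ℕ} (u : Fin d → Fin n → ℝ) (hu : ∀ j, ∑ i, u j i ^ 2 = 1)
    {t : ℝ} (ht : 0 < t) :
    (errLaw n v) {e | t < ∑ j, (∑ i, e i * u j i) ^ 2} ≤ ENNReal.ofReal (d * v / t) := by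
  have h := markov_real (integrable_finset_sum Finset.univ fun j _ => (errLaw_quad n v (u j)).1)
    (fun e => Finset.sum_nonneg fun i _ => sq_nonneg _) ht
  refine h.trans (le_of_eq ?_)
  congr 2
  rw [integral_finset_sum _ fun j _ => (errLaw_quad n v (u j)).1]
  simp [(errLaw_quad n v _).2, hu]

/-- The design map `ξ ↦ (f_ξ(x_i))_i`. -/
def designMap {p : ℕ} (φ : (Fin p → ℝ) → ℝ) (m : ℕ) (α : ℝ) (n : ℕ) (x : Fin n → Fin p → ℝ) :
    ((Fin p → Fin (Kn α p n)) → (Fin p → Fin (m + 1)) → ℝ) →ₗ[ℝ] (Fin n → ℝ) where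
  toFun := fun ξ i => simpleKmp φ m α n ξ (x i)
  map_add' := by
    intro a b; funext i
    simp only [simpleKmp, kmpFun, Pi.add_apply, add_mul, Finset.sum_add_distrib]
  map_smul' := by
    intro a b; funext i
    simp only [simpleKmp, kmpFun, Pi.smul_apply, smul_eq_mul, mul_assoc, ← Finset.mul_sum, RingHom.id_apply]

theorem designMap_cont {p : ℕ} (φ : (Fin p → ℝ) → ℝ) (m : ℕ) (α : ℝ) (n : ℕ) (x : Fin p → ℝ) :
    Continuous (fun ξ : (Fin p → Fin (Kn α p n)) → (Fin p → Fin (m + 1)) → ℝ =>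
      simpleKmp φ m α n ξ x) := by
  unfold simpleKmp kmpFun
  fun_prop

theorem fin_bound {p m n : ℕ} {α B b a c A R V ε2 δ : ℝ} (hn : 0 < n)
    (φ : (Fin p → ℝ) → ℝ) (f₀ : (Fin p → ℝ) → ℝ) (x : Fin n → Fin p → ℝ)
    (hfB : ∀ i, |f₀ (x i)| ≤ B)
    {πv : Measure ℝ} (hc : 0 < c) (ha : 0 ≤ a) (hb : 0 ≤ b)
    (hπv : πv = (volume.restrict (Set.Ioi (0 : ℝ))).withDensity
      fun v => ENNReal.ofReal (c * v ^ (-a / 2 - 1) * Real.exp (-b / (2 * v))))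
    (xs : (Fin p → Fin (Kn α p n)) → (Fin p → Fin (m + 1)) → ℝ)
    (hxsA : ∀ k s, |xs k s| ≤ A)
    (hxs : ∀ i, (simpleKmp φ m α n xs (x i) - f₀ (x i)) ^ 2 ≤ A ^ 2 * ε2)
    (hR : 0 < R) (hV : 0 < V) (hε : 0 < ε2)
    (hDA : ((Fintype.card (Fin p → Fin (Kn α p n)) * Fintype.card (Fin p → Fin (m + 1)) : ℕ) : ℝ)
      * A ^ 2 ≤ (n : ℝ) ^ 2 * (n * ε2))
    (hδ : (√2)⁻¹ ^ n * Real.exp ((b + (2 * n * B ^ 2 + 2 * (n * R))) / (2 * V))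
      + Real.exp (-(n * ε2) / (4 * V)) *
        √2 ^ (Fintype.card (Fin p → Fin (Kn α p n)) * Fintype.card (Fin p → Fin (m + 1))) ≤ δ)
    (v : ℝ≥0) :
    (errLaw n v) {e : Fin n → ℝ | δ <
              postGen (fixedPrior α p m n πv)
                (fun θ => ∏ i,
                  gaussD (Real.sqrt θ.2)
                    (f₀ (x i) + e i - simpleKmp φ m α n θ.1 (x i)))
                {θ : ((Fin p → Fin (Kn α p n)) → (Fin p → Fin (m + 1)) → ℝ) × ℝ |
                  (12 + 9 * A ^ 2) * ε2 <
                    (1 / (n : ℝ)) *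
                      ∑ i, (simpleKmp φ m α n θ.1 (x i) - f₀ (x i)) ^ 2}} ≤
      ENNReal.ofReal (n * v / (n * R)) + ENNReal.ofReal
        (((Fintype.card (Fin p → Fin (Kn α p n)) * Fintype.card (Fin p → Fin (m + 1)) : ℕ) : ℝ)
          * v / (n * ε2)) := by
  set D := Fintype.card (Fin p → Fin (Kn α p n)) * Fintype.card (Fin p → Fin (m + 1)) with hD
  have hn' : (0 : ℝ) < n := by exact_mod_cast hn
  have ht : 0 < n * ε2 := by positivity
  set Ψ := designMap φ m α n x with hΨ
  have hΨa : ∀ ξ i, Ψ ξ i = simpleKmp φ m α n ξ (x i) := fun _ _ => rfl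
  have hΨc : ∀ i, Continuous fun ξ => Ψ ξ i := fun i => designMap_cont φ m α n (x i)
  obtain ⟨d, u, hd, hu, hproj⟩ := proj_exists Ψ
  have h1 := errLaw_norm n v (t := n * R) (by positivity)
  have h2 := (errLaw_proj n v u hu ht).trans (ENNReal.ofReal_le_ofReal
    (show d * (v : ℝ) / (n * ε2) ≤ (D : ℝ) * v / (n * ε2) by
      have : (d : ℝ) ≤ D := by exact_mod_cast hd
      gcongr))
  refine le_trans (le_trans (measure_mono ?_) (measure_union_le _ _)) (add_le_add h1 h2)
  intro e he
  by_contra hcon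
  simp only [Set.mem_union, Set.mem_ofPred_eq, not_or, not_lt] at hcon
  obtain ⟨he1, he2⟩ := hcon
  have hlam : 0 < ((n : ℝ) ^ 2)⁻¹ := by positivity
  obtain ⟨x₀, Qh, hQ0, hQ1, hQ, hmain⟩ := ridge_bounds Ψ hlam (fun i => f₀ (x i)) e xs
    (E := n * ε2) ht.le (fun η => (hproj e η).trans (by gcongr))
  have hQB : Qh ≤ 2 * n * B ^ 2 + 2 * (n * R) := by
    refine hQ1.trans ?_
    calc ∑ i, (f₀ (x i) + e i) ^ 2 ≤ ∑ i, (2 * B ^ 2 + 2 * e i ^ 2) := by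
          apply Finset.sum_le_sum; intro i _
          have : f₀ (x i) ^ 2 ≤ B ^ 2 := by
            rw [← sq_abs]; exact pow_le_pow_left₀ (abs_nonneg _) (hfB i) 2
          nlinarith [sq_nonneg (f₀ (x i) - e i)]
      _ = 2 * n * B ^ 2 + 2 * ∑ i, e i ^ 2 := by
          simp only [Finset.sum_add_distrib, ← Finset.mul_sum, Finset.sum_const, Finset.card_univ, Fintype.card_fin, nsmul_eq_mul]; ring
      _ ≤ _ := by linarith
  have hG : ∑ i, (f₀ (x i) - Ψ xs i) ^ 2 ≤ A ^ 2 * (n * ε2) := by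
    calc ∑ i, (f₀ (x i) - Ψ xs i) ^ 2 ≤ ∑ i : Fin n, A ^ 2 * ε2 := by
          apply Finset.sum_le_sum; intro i _
          have := hxs i
          rw [hΨa]; linarith [sub_sq_comm (f₀ (x i)) (simpleKmp φ m α n xs (x i))]
      _ = _ := by simp; ring
  have hZ : ((n : ℝ) ^ 2)⁻¹ * ∑ k, ∑ s, xs k s ^ 2 ≤ n * ε2 := by
    have : ∑ k, ∑ s, xs k s ^ 2 ≤ (D : ℝ) * A ^ 2 := by
      calc ∑ k, ∑ s, xs k s ^ 2 ≤ ∑ k : Fin p → Fin (Kn α p n), ∑ s : Fin p → Fin (m + 1), A ^ 2 := by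
            apply Finset.sum_le_sum; intro k _
            apply Finset.sum_le_sum; intro s _
            rw [← sq_abs]; exact pow_le_pow_left₀ (abs_nonneg _) (hxsA k s) 2
        _ = _ := by
            simp only [Finset.sum_const, Finset.card_univ, nsmul_eq_mul, hD]; push_cast; ring
    rw [inv_mul_le_iff₀ (by positivity)]
    exact this.trans hDA
  refine absurd he (not_lt.2 (le_trans ?_ hδ))
  refine (post_bound hn hc ha hπv (fun i => f₀ (x i) + e i) (fun i ξ => simpleKmp φ m α n ξ (x i))
    hΨc (fun η => ∑ i, Ψ η i ^ 2 + ((n : ℝ) ^ 2)⁻¹ * ∑ k, ∑ s, η k s ^ 2) ?_ ?_ x₀ (Qh := Qh) (T := n * ε2)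
    (V := V) hQ (by linarith) hV ht.le _ ?_ ?_).trans ?_
  · fun_prop
  · intro t y
    simp only [map_smul, Pi.smul_apply, smul_eq_mul, mul_pow, ← Finset.mul_sum]; ring
  · apply measurableSet_lt measurable_const
    apply Measurable.const_mul
    apply Finset.measurable_fun_sum _ fun i _ => ?_
    have := (hΨc i).measurable
    exact ((this.comp measurable_fst).sub_const _).pow_const 2
  · intro θ hθ
    have h3 := hmain θ.1
    simp only [Set.mem_ofPred_eq] at hθ
    rw [one_div, lt_inv_mul_iff₀ hn'] at hθ
    have h4 : ∑ i, (simpleKmp φ m α n θ.1 (x i) - f₀ (x i)) ^ 2 = ∑ i, (Ψ θ.1 i - f₀ (x i)) ^ 2 := rfl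
    rw [h4] at hθ
    have h5 : 0 ≤ ((n : ℝ) ^ 2)⁻¹ * ∑ k, ∑ s, (θ.1 - x₀) k s ^ 2 := by positivity
    have h6 : n * ((12 + 9 * A ^ 2) * ε2) = 12 * (n * ε2) + 9 * (A ^ 2 * (n * ε2)) := by ring
    rw [h6] at hθ
    linarith
  · gcongr

theorem rate_facts {p : ℕ} {α : ℝ} (hα : 0 < α) (m n : ℕ) (hn : 2 < n) :
    ∃ U : ℝ, 1 ≤ U ∧ 0 < Kn α p n ∧
      0 < (n : ℝ) ^ (-(2 * α) / (2 * α + p)) * Real.log n ^ (2 * α / (2 * α + p)) ∧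
      ((Kn α p n : ℝ) ^ (-α)) ^ 2 ≤ (n : ℝ) ^ (-(2 * α) / (2 * α + p)) * Real.log n ^ (2 * α / (2 * α + p)) ∧
      n * ((n : ℝ) ^ (-(2 * α) / (2 * α + p)) * Real.log n ^ (2 * α / (2 * α + p))) = U * Real.log n ∧
      ((Fintype.card (Fin p → Fin (Kn α p n)) * Fintype.card (Fin p → Fin (m + 1)) : ℕ) : ℝ) ≤
        (2 * (m + 1)) ^ p * U := by
  have hn' : (2 : ℝ) < n := by exact_mod_cast hn
  have hL : 0 < Real.log n := Real.log_pos (by linarith)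
  have hLn : Real.log n ≤ n := (Real.log_le_self (by linarith))
  have hs : 0 < 2 * α + p := by positivity
  set u := (n : ℝ) / Real.log n with hu
  have hu1 : 1 ≤ u := by rw [hu, le_div_iff₀ hL]; linarith
  have hu0 : 0 < u := by linarith
  have hε : (n : ℝ) ^ (-(2 * α) / (2 * α + p)) * Real.log n ^ (2 * α / (2 * α + p)) =
      u ^ (-(2 * α) / (2 * α + p)) := by
    rw [neg_div, hu, Real.div_rpow (by linarith) hL.le, Real.rpow_neg hL.le, div_inv_eq_mul]
  rw [hε]
  set w := u ^ (1 / (2 * α + (p : ℝ))) with hw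
  have hw1 : 1 ≤ w := Real.one_le_rpow hu1 (by positivity)
  have hK : Kn α p n = ⌈w⌉₊ := rfl
  have hKw : w ≤ Kn α p n := by rw [hK]; exact Nat.le_ceil _
  have hK2 : (Kn α p n : ℝ) ≤ 2 * w := by
    rw [hK]; have := (Nat.ceil_lt_add_one (show 0 ≤ w by linarith)); linarith
  have hwp : w ^ p = u ^ ((p : ℝ) / (2 * α + p)) := by
    rw [hw, ← Real.rpow_natCast, ← Real.rpow_mul hu0.le]; congr 1; ring
  refine ⟨w ^ p, one_le_pow₀ hw1, ?_, by positivity, ?_, ?_, ?_⟩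
  · rw [hK]; exact Nat.ceil_pos.2 (by linarith)
  · have h1 : u ^ (-(2 * α) / (2 * α + p)) = (w ^ (-α)) ^ 2 := by
      rw [hw, ← Real.rpow_natCast, ← Real.rpow_mul hu0.le, ← Real.rpow_mul hu0.le]
      congr 1; push_cast; ring
    rw [h1]
    apply pow_le_pow_left₀ (by positivity)
    exact Real.rpow_le_rpow_of_nonpos (by linarith) hKw (by linarith)
  · have h1 : (n : ℝ) = u * Real.log n := by rw [hu]; field_simp
    have h2 : u * u ^ (-(2 * α) / (2 * α + p)) = w ^ p := by
      rw [hwp]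
      nth_rewrite 1 [← Real.rpow_one u]
      rw [← Real.rpow_add hu0]; congr 1; field_simp; ring
    rw [← h2]
    nth_rewrite 1 [h1]
    ring
  · simp only [Fintype.card_fun, Fintype.card_fin]
    push_cast
    calc (Kn α p n : ℝ) ^ p * ((m : ℝ) + 1) ^ p ≤ (2 * w) ^ p * ((m : ℝ) + 1) ^ p := by gcongr
      _ = _ := by rw [mul_pow, mul_pow]; ring

theorem small_term (B b cD : ℝ) (hb : 0 ≤ b) :
    ∀ δ : ℝ, 0 < δ → ∀ᶠ n : ℕ in atTop, ∀ (U : ℝ) (D : ℕ), 1 ≤ U → (D : ℝ) ≤ cD * U →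
      (√2)⁻¹ ^ n * Real.exp ((b + (2 * n * B ^ 2 + 2 * (n * √(Real.log n)))) / (2 * (16 * √(Real.log n))))
      + Real.exp (-(U * Real.log n) / (4 * (16 * √(Real.log n)))) * √2 ^ D ≤ δ := by
  intro δ hδ
  have hLt : Tendsto (fun n : ℕ => √(Real.log n)) atTop atTop :=
    Real.tendsto_sqrt_atTop.comp (Real.tendsto_log_atTop.comp tendsto_natCast_atTop_atTop)
  have h1 : Tendsto (fun n : ℕ => Real.exp (-((n : ℝ) / 8))) atTop (nhds 0) :=
    Real.tendsto_exp_neg_atTop_nhds_zero.comp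
      ((tendsto_natCast_atTop_atTop).atTop_div_const (by norm_num))
  have h2 : Tendsto (fun n : ℕ => Real.exp (-(√(Real.log n) / 64 - cD))) atTop (nhds 0) :=
    Real.tendsto_exp_neg_atTop_nhds_zero.comp
      (tendsto_atTop_add_const_right _ (-cD) (hLt.atTop_div_const (by norm_num)))
  filter_upwards [h1.eventually (gt_mem_nhds (half_pos hδ)), h2.eventually (gt_mem_nhds (half_pos hδ)),
    hLt.eventually_ge_atTop (B ^ 2 + b / 2), hLt.eventually_ge_atTop (64 * cD),
    hLt.eventually_ge_atTop 1, eventually_ge_atTop 1] with n e1 e2 e3 e4 e5 e6 U D hU hD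
  have hn : (1 : ℝ) ≤ n := by exact_mod_cast e6
  set R := √(Real.log n) with hR
  have hR0 : 0 < R := by linarith
  have hLR : Real.log n = R * R := by
    rw [hR, Real.mul_self_sqrt (Real.log_nonneg hn)]
  have a1 : (√2)⁻¹ ^ n * Real.exp ((b + (2 * n * B ^ 2 + 2 * (n * R))) / (2 * (16 * R))) ≤
      Real.exp (-((n : ℝ) / 8)) := by
    have b1 : (b + (2 * n * B ^ 2 + 2 * (n * R))) / (2 * (16 * R)) ≤ n / 8 := by
      rw [div_le_iff₀ (by positivity)]
      have : n * (B ^ 2 + b / 2) ≤ n * R := by gcongr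
      nlinarith
    have b2 : (√2)⁻¹ = Real.exp (-(Real.log 2 / 2)) := by
      rw [Real.exp_neg, Real.exp_half, Real.exp_log (by norm_num)]
    rw [b2, ← Real.exp_nat_mul, ← Real.exp_add, Real.exp_le_exp]
    have := Real.log_two_gt_d9
    nlinarith
  have a2 : Real.exp (-(U * Real.log n) / (4 * (16 * R))) * √2 ^ D ≤
      Real.exp (-(R / 64 - cD)) := by
    have b2 : √2 ≤ Real.exp 1 := by
      have : √2 ≤ 2 := Real.sqrt_le_iff.2 ⟨by norm_num, by norm_num⟩
      linarith [Real.add_one_le_exp (1 : ℝ)]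
    have b3 : √2 ^ D ≤ Real.exp (cD * U) := by
      calc √2 ^ D ≤ (Real.exp 1) ^ D := by gcongr
        _ = Real.exp D := by rw [← Real.exp_nat_mul, mul_one]
        _ ≤ _ := by gcongr
    have b4 : -(U * Real.log n) / (4 * (16 * R)) = -(U * R / 64) := by
      rw [hLR]; field_simp; norm_num
    calc _ ≤ Real.exp (-(U * R / 64)) * Real.exp (cD * U) := by rw [b4]; gcongr
      _ = Real.exp (-(U * (R / 64 - cD))) := by rw [← Real.exp_add]; congr 1; ring
      _ ≤ _ := by
        rw [Real.exp_le_exp]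
        have : 0 ≤ R / 64 - cD := by linarith
        nlinarith
  linarith

/-- Rate of contraction, fixed design, simplified prior: with
`K_n = ⌈(n/log n)^{1/(2α+p)}⌉`, `h = 2/K_n`, centers fixed at `μ_k^⋆`, coefficients
`ξ_{ks} | σ ~ N(0, n²σ²)` and `σ²` inverse-Gamma, the posterior contracts around an
α-Hölder `f₀` at rate `ε_n = (n/log n)^{-α/(2α+p)}` in squared empirical `L₂(P_n)`
distance. -/
theorem statement15 {p m : ℕ} (hp : 0 < p) (α B : ℝ) (hα : 0 < α) (hB : 0 < B)
    (hm : α ≤ (m : ℝ)) (σ₀ : ℝ) (hσ₀ : 0 < σ₀)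
    (aσ bσ : ℝ) (haσ : 2 ≤ aσ) (hbσ : 2 ≤ bσ)
    (φ : (Fin p → ℝ) → ℝ) (hφ : IsBoxedKernel φ)
    (hφpos : ∀ u : Fin p → ℝ, ‖u‖ < 1 → 0 < φ u)
    (f₀ : (Fin p → ℝ) → ℝ) (hf₀ : IsHolder p α B f₀)
    (X : (n : ℕ) → Fin n → (Fin p → ℝ)) (hX : ∀ n i, X n i ∈ cube p)
    (πv : Measure ℝ) [IsProbabilityMeasure πv]
    (hπv : ∃ c : ℝ, 0 < c ∧ πv = (volume.restrict (Set.Ioi (0 : ℝ))).withDensity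
      fun v => ENNReal.ofReal (c * v ^ (-aσ / 2 - 1) * Real.exp (-bσ / (2 * v)))) :
    ∃ M : ℝ, 0 < M ∧ ∀ δ : ℝ, 0 < δ →
      Filter.Tendsto (fun n : ℕ =>
          (Measure.pi fun _ : Fin n =>
              ProbabilityTheory.gaussianReal 0 (Real.toNNReal (σ₀ ^ 2)))
            {e : Fin n → ℝ | δ <
              postGen (fixedPrior α p m n πv)
                (fun θ => ∏ i,
                  gaussD (Real.sqrt θ.2)
                    (f₀ (X n i) + e i - simpleKmp φ m α n θ.1 (X n i)))
                {θ : ((Fin p → Fin (Kn α p n)) → (Fin p → Fin (m + 1)) → ℝ) × ℝ |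
                  M * ((n : ℝ) ^ (-(2 * α) / (2 * α + p)) *
                      Real.log n ^ (2 * α / (2 * α + p))) <
                    (1 / (n : ℝ)) *
                      ∑ i, (simpleKmp φ m α n θ.1 (X n i) - f₀ (X n i)) ^ 2}})
        Filter.atTop (nhds 0) := by
  obtain ⟨c, hc, hπ⟩ := hπv
  obtain ⟨A, hA, happ⟩ := kmp_approx hα hm f₀ hf₀ hφ hφpos
  refine ⟨12 + 9 * A ^ 2, by positivity, fun δ hδ => ?_⟩
  set v := Real.toNNReal (σ₀ ^ 2) with hv
  set cD : ℝ := (2 * ((m : ℝ) + 1)) ^ p with hcD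
  have hcD0 : 0 ≤ cD := by positivity
  have hlog : Tendsto (fun n : ℕ => Real.log n) atTop atTop :=
    Real.tendsto_log_atTop.comp tendsto_natCast_atTop_atTop
  have hLt : Tendsto (fun n : ℕ => √(Real.log n)) atTop atTop := Real.tendsto_sqrt_atTop.comp hlog
  have hlim : Tendsto (fun n : ℕ => ENNReal.ofReal ((v : ℝ) / √(Real.log n)) +
      ENNReal.ofReal (cD * v / Real.log n)) atTop (nhds 0) := by
    have h1 := ENNReal.tendsto_ofReal (hLt.const_div_atTop (v : ℝ))
    have h2 := ENNReal.tendsto_ofReal (hlog.const_div_atTop (cD * v : ℝ))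
    simpa using h1.add h2
  refine tendsto_of_tendsto_of_tendsto_of_le_of_le' tendsto_const_nhds hlim
    (Eventually.of_forall fun _ => zero_le) ?_
  filter_upwards [small_term B bσ cD (by linarith) δ hδ, eventually_gt_atTop 2,
    hlog.eventually_ge_atTop (cD * A ^ 2), hlog.eventually_ge_atTop 1] with n hsm hn2 hL1 hL2
  obtain ⟨U, hU1, hK, hε, hKε, hnε, hD⟩ := rate_facts (p := p) hα m n hn2
  set ε2 := (n : ℝ) ^ (-(2 * α) / (2 * α + p)) * Real.log n ^ (2 * α / (2 * α + p)) with hε2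
  obtain ⟨xs, hxsA, hxs⟩ := happ (Kn α p n) hK
  have hn1 : (1 : ℝ) ≤ n := by exact_mod_cast (by omega : 1 ≤ n)
  have hR : 0 < √(Real.log n) := Real.sqrt_pos.2 (by linarith)
  have hmain := fin_bound (n := n) (δ := δ) (by omega) φ f₀ (X n) (fun i => holder_bound f₀ hf₀ _ (hX n i))
    hc (by linarith) (by linarith) hπ xs hxsA (fun i => by
      have h := hxs (X n i) (hX n i)
      have h' := pow_le_pow_left₀ (abs_nonneg _) h 2
      rw [sq_abs, mul_pow] at h'
      exact h'.trans (by gcongr)) hR (V := 16 * √(Real.log n)) (by positivity) hε (by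
      rw [hnε]
      calc _ ≤ (cD * U) * A ^ 2 := by gcongr
        _ = U * (cD * A ^ 2) := by ring
        _ ≤ U * Real.log n := by gcongr
        _ ≤ _ := le_mul_of_one_le_left (by positivity) (one_le_pow₀ hn1)) (by
      rw [hnε]; exact hsm U _ hU1 hD) v
  refine hmain.trans (add_le_add (ENNReal.ofReal_le_ofReal (le_of_eq ?_)) (ENNReal.ofReal_le_ofReal ?_))
  · field_simp
  · rw [hnε]
    calc _ ≤ (cD * U) * v / (U * Real.log n) := by gcongr
      _ = _ := by field_simp

end KMP
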